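/- arXiv:2003.02030 — 9 statements merged into one kernel-verified Lean document; each statement's English description precedes it below -/
import Mathlib

section
/- For probability measures P and ν on a measurable space X, the supremum of ∫ c dP over all measurable functions c : X → ℝ such that ∫ e^c dν = 1 and ∫ c dP is well defined (not +∞ − ∞) equals D_KL(P | ν) (as elements of the extended real line). Equivalently, S^ν(P) = −D_KL(P | ν). -/
open MeasureTheory Real ENNReal

noncomputable section
open scoped Classical

/-- The extended-real integral `∫ f⁺ dμ − ∫ f⁻ dμ`, valued in `EReal`. -/
def eInt {α : Type*} [MeasurableSpace α] (μ : Measure α) (f : α → ℝ) : EReal :=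
  ((∫⁻ x, ENNReal.ofReal (f x) ∂μ : ℝ≥0∞) : EReal)
    - ((∫⁻ x, ENNReal.ofReal (-f x) ∂μ : ℝ≥0∞) : EReal)

/-- The extended integral of `f` with respect to `μ` is well defined (not `+∞ − ∞`). -/
def IntWellDef {α : Type*} [MeasurableSpace α] (μ : Measure α) (f : α → ℝ) : Prop :=
  (∫⁻ x, ENNReal.ofReal (f x) ∂μ ≠ ⊤) ∨ (∫⁻ x, ENNReal.ofReal (-f x) ∂μ ≠ ⊤)

/-- Kullback–Leibler divergence `D_KL(μ | ν) = ∫ log (dμ/dν) dμ` if `μ ≪ ν`, `+∞` otherwise. -/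
def KL {α : Type*} [MeasurableSpace α] (μ ν : Measure α) : EReal :=
  if μ ≪ ν then eInt μ (fun x => Real.log ((μ.rnDeriv ν x).toReal)) else ⊤

/-- `S^ν(P)`, minus the supremum of `∫ c dP` over measurable `c` with `∫ e^c dν = 1`
and `∫ c dP` well defined. -/
def SEnt {X : Type*} [MeasurableSpace X] (ν P : Measure X) : EReal :=
  - sSup { r : EReal | ∃ c : X → ℝ, Measurable c ∧ (∫ x, Real.exp (c x) ∂ν) = 1 ∧
      IntWellDef P c ∧ r = eInt P c }

lemma aux_ereal (a b c d e : ℝ≥0∞) (hb : b ≠ ⊤) (hd : d ≠ ⊤) (he : e ≠ ⊤)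
    (h : a + d ≤ c + b + e) : (a : EReal) - (b : EReal) ≤ ((c : EReal) - (d : EReal)) + (e : EReal) := by
  lift b to NNReal using hb
  lift d to NNReal using hd
  lift e to NNReal using he
  by_cases hc : c = ⊤
  · subst hc
    have h1 : ((⊤ : ℝ≥0∞) : EReal) - ((d : ℝ≥0∞) : EReal) = ⊤ := by
      rw [EReal.coe_ennreal_top]
      exact EReal.top_sub_coe (d : ℝ)
    rw [h1]
    have h2 : (⊤ : EReal) + ((e : ℝ≥0∞) : EReal) = ⊤ := EReal.top_add_coe (e : ℝ)
    rw [h2]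
    exact le_top
  · lift c to NNReal using hc
    have ha : a ≠ ⊤ := by
      rintro rfl
      rw [top_add, top_le_iff] at h
      exact absurd h (by finiteness)
    lift a to NNReal using ha
    have h' : (a : ℝ) + d ≤ c + b + e := by exact_mod_cast h
    have h3 : (((a : ℝ) - (b : ℝ) : ℝ) : EReal) ≤ (((c : ℝ) - (d : ℝ) + (e : ℝ) : ℝ) : EReal) := by
      rw [EReal.coe_le_coe_iff]; linarith
    rw [EReal.coe_add, EReal.coe_sub, EReal.coe_sub] at h3
    exact h3

lemma aux_le (x S : EReal) (h : ∀ δ : ℝ, 0 < δ → x ≤ S + ((ENNReal.ofReal δ : ℝ≥0∞) : EReal)) : x ≤ S := by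
  have h : ∀ δ : ℝ, 0 < δ → x ≤ S + (δ : EReal) := by
    intro δ hδ
    have := h δ hδ
    rwa [EReal.coe_ennreal_ofReal, max_eq_left hδ.le] at this
  induction S using EReal.rec with
  | bot => simpa using h 1 one_pos
  | top => exact le_top
  | coe s =>
    induction x using EReal.rec with
    | bot => exact bot_le
    | top => 
      have h1 := h 1 one_pos
      rw [← EReal.coe_add, top_le_iff] at h1
      exact absurd h1 (EReal.coe_ne_top _)
    | coe x =>
      rw [EReal.coe_le_coe_iff]
      refine le_of_forall_pos_le_add fun δ hδ => ?_
      have h1 := h δ hδ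
      rw [← EReal.coe_add, EReal.coe_le_coe_iff] at h1
      exact h1

lemma aux_pt (u v e : ℝ) (he : 0 ≤ e) (h : u ≤ v + e) :
    ENNReal.ofReal u + ENNReal.ofReal (-v) ≤
      ENNReal.ofReal v + ENNReal.ofReal (-u) + ENNReal.ofReal e := by
  rw [ENNReal.ofReal, ENNReal.ofReal, ENNReal.ofReal, ENNReal.ofReal, ENNReal.ofReal]
  norm_cast
  rw [← NNReal.coe_le_coe]
  push_cast [Real.coe_toNNReal']
  grind

section
variable {X : Type*} [MeasurableSpace X] (P ν : Measure X)
    [IsProbabilityMeasure P] [IsProbabilityMeasure ν]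

lemma aux_E (hac : P ≪ ν) (g : X → ℝ) (hg : Measurable g) :
    ∫⁻ x, ENNReal.ofReal (Real.exp (g x - Real.log ((P.rnDeriv ν x).toReal))) ∂P
      ≤ ∫⁻ x, ENNReal.ofReal (Real.exp (g x)) ∂ν := by
  rw [← lintegral_rnDeriv_mul hac (by fun_prop)]
  apply lintegral_mono_ae
  filter_upwards [P.rnDeriv_lt_top ν] with x hx
  by_cases h0 : P.rnDeriv ν x = 0
  · simp [h0]
  · have hpos := ENNReal.toReal_pos h0 hx.ne
    rw [Real.exp_sub, Real.exp_log hpos]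
    nth_rw 1 [← ENNReal.ofReal_toReal hx.ne]
    rw [← ENNReal.ofReal_mul hpos.le, mul_div_cancel₀ _ hpos.ne']

lemma aux_neg (hac : P ≪ ν) :
    ∫⁻ x, ENNReal.ofReal (-Real.log ((P.rnDeriv ν x).toReal)) ∂P ≠ ⊤ := by
  have h := aux_E P ν hac (fun _ => 0) measurable_const
  have h2 : ∫⁻ x, ENNReal.ofReal (-Real.log ((P.rnDeriv ν x).toReal)) ∂P ≤ 1 := by
    refine le_trans (lintegral_mono fun x => ?_) (h.trans (by simp))
    apply ENNReal.ofReal_le_ofReal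
    have := Real.add_one_le_exp (0 - Real.log ((P.rnDeriv ν x).toReal))
    linarith
  exact (h2.trans_lt ENNReal.one_lt_top).ne

lemma aux_upper (hac : P ≪ ν) (c : X → ℝ) (hc : Measurable c)
    (h1 : (∫ x, Real.exp (c x) ∂ν) = 1) (hw : IntWellDef P c) :
    eInt P c ≤ eInt P (fun x => Real.log ((P.rnDeriv ν x).toReal)) := by
  by_cases hm : ∫⁻ x, ENNReal.ofReal (-c x) ∂P = ⊤
  · have hp := hw.resolve_right (not_not.mpr hm)
    unfold eInt
    rw [hm, EReal.coe_ennreal_top, EReal.sub_top]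
    exact bot_le
  have hint : Integrable (fun x => Real.exp (c x)) ν := by
    by_contra hn
    rw [integral_undef hn] at h1
    exact zero_ne_one h1
  have hE := aux_E P ν hac c hc
  rw [← ofReal_integral_eq_lintegral_ofReal hint
    (Filter.Eventually.of_forall fun x => (Real.exp_pos _).le), h1, ENNReal.ofReal_one] at hE
  set l : X → ℝ := fun x => Real.log ((P.rnDeriv ν x).toReal) with hl
  have hlm : Measurable l := by fun_prop
  have key : ∫⁻ x, (ENNReal.ofReal (c x) + ENNReal.ofReal (-l x) + 1) ∂P ≤
      ∫⁻ x, (ENNReal.ofReal (l x) + ENNReal.ofReal (-c x) 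
        + ENNReal.ofReal (Real.exp (c x - l x))) ∂P := by
    refine lintegral_mono fun x => ?_
    have h := Real.add_one_le_exp (c x - l x)
    have := Real.exp_pos (c x - l x)
    dsimp only
    rw [← ENNReal.ofReal_one]
    rw [ENNReal.ofReal, ENNReal.ofReal, ENNReal.ofReal, ENNReal.ofReal, ENNReal.ofReal, ENNReal.ofReal]
    norm_cast
    rw [← NNReal.coe_le_coe]
    push_cast [Real.coe_toNNReal']
    grind
  rw [lintegral_add_left (by fun_prop), lintegral_add_left (by fun_prop),
    lintegral_add_left (by fun_prop), lintegral_add_left (by fun_prop), lintegral_one,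
    measure_univ] at key
  have key2 := key.trans (add_le_add le_rfl hE)
  have key3 := (ENNReal.add_le_add_iff_right ENNReal.one_ne_top).1 key2
  have := aux_ereal _ _ _ _ 0 hm (aux_neg P ν hac) ENNReal.zero_ne_top (by simpa using key3)
  simpa [eInt] using this

lemma aux_lower (hac : P ≪ ν) (δ : ℝ) (hδ : 0 < δ) : ∃ c : X → ℝ, Measurable c ∧
    (∫ x, Real.exp (c x) ∂ν) = 1 ∧ IntWellDef P c ∧
    eInt P (fun x => Real.log ((P.rnDeriv ν x).toReal))
      ≤ eInt P c + ((ENNReal.ofReal δ : ℝ≥0∞) : EReal) := by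
  set t := Real.exp (-δ) with ht
  have ht0 : 0 < t := Real.exp_pos _
  have ht1 : t < 1 := by rw [ht, Real.exp_lt_one_iff]; linarith
  have hpos : ∀ x, 0 < t * (P.rnDeriv ν x).toReal + (1 - t) := fun x => by
    have : 0 ≤ (P.rnDeriv ν x).toReal := ENNReal.toReal_nonneg
    have := mul_nonneg ht0.le this
    linarith
  set c : X → ℝ := fun x => Real.log (t * (P.rnDeriv ν x).toReal + (1 - t)) with hc
  have hcm : Measurable c := by fun_prop
  set l : X → ℝ := fun x => Real.log ((P.rnDeriv ν x).toReal) with hl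
  have hlm : Measurable l := by fun_prop
  have hcn : ∫⁻ x, ENNReal.ofReal (-c x) ∂P ≠ ⊤ := by
    have : ∫⁻ x, ENNReal.ofReal (-c x) ∂P ≤ ∫⁻ x, ENNReal.ofReal (-Real.log (1 - t)) ∂P := by
      refine lintegral_mono fun x => ENNReal.ofReal_le_ofReal (neg_le_neg ?_)
      apply Real.log_le_log (by linarith)
      have : 0 ≤ (P.rnDeriv ν x).toReal := ENNReal.toReal_nonneg
      have := mul_nonneg ht0.le this
      linarith
    refine (this.trans_lt ?_).ne
    simp
  refine ⟨c, hcm, ?_, Or.inr hcn, ?_⟩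
  · simp only [hc, Real.exp_log (hpos _)]
    rw [integral_add (Measure.integrable_toReal_rnDeriv.const_mul t) (integrable_const _),
      integral_const_mul, Measure.integral_toReal_rnDeriv hac]
    simp
  · apply aux_ereal _ _ _ _ _ (aux_neg P ν hac) hcn ENNReal.ofReal_ne_top
    have key : ∫⁻ x, (ENNReal.ofReal (l x) + ENNReal.ofReal (-c x)) ∂P ≤
      ∫⁻ x, (ENNReal.ofReal (c x) + ENNReal.ofReal (-l x) + ENNReal.ofReal δ) ∂P := by
      apply lintegral_mono_ae
      filter_upwards [Measure.rnDeriv_pos hac, hac.ae_le (P.rnDeriv_lt_top ν)] with x h0 hx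
      apply aux_pt _ _ _ hδ.le
      have hp := ENNReal.toReal_pos h0.ne' hx.ne
      have : Real.log (t * (P.rnDeriv ν x).toReal) ≤ c x :=
        Real.log_le_log (mul_pos ht0 hp) (by linarith)
      rw [Real.log_mul ht0.ne' hp.ne', ht, Real.log_exp] at this
      simp only [hl]
      linarith
    rw [lintegral_add_left (by fun_prop), lintegral_add_left (by fun_prop),
      lintegral_add_left (by fun_prop), lintegral_const, measure_univ, mul_one] at key
    exact key

lemma aux_sing (hac : ¬ P ≪ ν) (M : ℝ) : ∃ c : X → ℝ, Measurable c ∧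
    (∫ x, Real.exp (c x) ∂ν) = 1 ∧ IntWellDef P c ∧ (M : EReal) ≤ eInt P c := by
  have : ∃ s, MeasurableSet s ∧ ν s = 0 ∧ P s ≠ 0 := by
    by_contra! h
    exact hac (Measure.AbsolutelyContinuous.mk h)
  obtain ⟨s, hs, hν, hP⟩ := this
  have hp : 0 < (P s).toReal := ENNReal.toReal_pos hP (measure_ne_top _ _)
  set K : ℝ := |M| / (P s).toReal with hK
  have hK0 : 0 ≤ K := by positivity
  set c : X → ℝ := s.indicator (fun _ => K) with hc
  have hneg : ∫⁻ x, ENNReal.ofReal (-c x) ∂P = 0 := by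
    rw [← lintegral_zero (μ := P)]
    congr 1
    ext x
    apply ENNReal.ofReal_eq_zero.2
    have : 0 ≤ c x := Set.indicator_nonneg (fun _ _ => hK0) x
    linarith
  have hposi : ∫⁻ x, ENNReal.ofReal (c x) ∂P = ENNReal.ofReal |M| := by
    have : ∀ x, ENNReal.ofReal (c x) = s.indicator (fun _ => ENNReal.ofReal K) x := by
      intro x
      by_cases hx : x ∈ s <;> simp [hc, hx]
    simp_rw [this]
    rw [lintegral_indicator_const hs, ← ENNReal.ofReal_toReal (measure_ne_top P s),
      ← ENNReal.ofReal_mul hK0, hK, div_mul_cancel₀ _ hp.ne']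
  refine ⟨c, measurable_const.indicator hs, ?_, Or.inr (by simp [hneg]), ?_⟩
  · have : (fun x => Real.exp (c x)) =ᵐ[ν] fun _ => 1 := by
      filter_upwards [measure_eq_zero_iff_ae_notMem.1 hν] with x hx
      simp [hc, hx]
    rw [integral_congr_ae this]
    simp
  · unfold eInt
    rw [hneg, hposi, EReal.coe_ennreal_ofReal, max_eq_left (abs_nonneg M)]
    simp only [EReal.coe_ennreal_zero, sub_zero]
    exact EReal.coe_le_coe_iff.2 (le_abs_self M)

lemma aux_main :
    sSup { r : EReal | ∃ c : X → ℝ, Measurable c ∧ (∫ x, Real.exp (c x) ∂ν) = 1 ∧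
        IntWellDef P c ∧ r = eInt P c } = KL P ν := by
  by_cases hac : P ≪ ν
  · rw [KL, if_pos hac]
    apply le_antisymm
    · apply sSup_le
      rintro r ⟨c, hc, h1, hw, rfl⟩
      exact aux_upper P ν hac c hc h1 hw
    · apply aux_le
      intro δ hδ
      obtain ⟨c, hc, h1, hw, h⟩ := aux_lower P ν hac δ hδ
      exact h.trans (add_le_add (le_sSup ⟨c, hc, h1, hw, rfl⟩) le_rfl)
  · rw [KL, if_neg hac, EReal.eq_top_iff_forall_lt]
    intro M
    obtain ⟨c, hc, h1, hw, h⟩ := aux_sing P ν hac (M + 1)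
    refine lt_of_lt_of_le (EReal.coe_lt_coe_iff.2 (lt_add_one M)) (h.trans (le_sSup ⟨c, hc, h1, hw, rfl⟩))

end

/-- The supremum of `∫ c dP` over all measurable `c : X → ℝ` with `∫ e^c dν = 1` and `∫ c dP`
well defined equals `D_KL(P | ν)`; equivalently, `S^ν(P) = −D_KL(P | ν)`. -/
theorem statement0 {X : Type*} [MeasurableSpace X] (P ν : Measure X)
    [IsProbabilityMeasure P] [IsProbabilityMeasure ν] :
    sSup { r : EReal | ∃ c : X → ℝ, Measurable c ∧ (∫ x, Real.exp (c x) ∂ν) = 1 ∧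
        IntWellDef P c ∧ r = eInt P c } = KL P ν
      ∧ SEnt ν P = - KL P ν := by
  have h := aux_main P ν
  exact ⟨h, by rw [SEnt, h]⟩

end
end

section
/- Let X and Y be measurable spaces, ν̂ a probability kernel from Y to X, and π a probability measure on X × Y with y-marginal Q. Then the supremum of ∫ c dπ over all ν̂-normalized measurable functions c : X × Y → ℝ with well-defined ∫ c dπ equals D_KL(π | ν̂ dQ). Equivalently, H^{ν̂}(π) = −D_KL(π | ν̂ dQ); in particular, if ν̂ is the constant kernel ν̂^y = ν for a probability ν on X, then H^ν(π) = −D_KL(π | ν × Q). -/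
open MeasureTheory ENNReal ProbabilityTheory

noncomputable section
open scoped Classical

/-- `H^{ν̂}(π)`: entropy of `π` relative to the probability kernel `ν̂ = κ`, i.e. minus the
supremum of `∫ c dπ` over `κ`-normalized measurable functions with well-defined integral. -/
def Hker {X Y : Type*} [MeasurableSpace X] [MeasurableSpace Y]
    (κ : Kernel Y X) (π : Measure (X × Y)) : EReal :=
  - sSup { r : EReal | ∃ c : X × Y → ℝ, Measurable c ∧
      (∀ y, (∫ x, Real.exp (c (x, y)) ∂(κ y)) = 1) ∧ IntWellDef π c ∧ r = eInt π c }

/-- `H^ν(π)`: entropy of `π` relative to an a priori probability `ν` on `X`. -/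
def Hnu {X Y : Type*} [MeasurableSpace X] [MeasurableSpace Y]
    (ν : Measure X) (π : Measure (X × Y)) : EReal :=
  - sSup { r : EReal | ∃ c : X × Y → ℝ, Measurable c ∧
      (∀ y, (∫ x, Real.exp (c (x, y)) ∂ν) = 1) ∧ IntWellDef π c ∧ r = eInt π c }

/-- The probability `ν̂ dQ` on `X × Y`, defined by
`∫ f d(ν̂ dQ) = ∫_Y ∫_X f(x,y) dν̂^y(x) dQ(y)`. -/
def kernMeas {X Y : Type*} [MeasurableSpace X] [MeasurableSpace Y]
    (κ : Kernel Y X) (Q : Measure Y) : Measure (X × Y) :=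
  (Q.compProd κ).map Prod.swap


theorem eInt_mono_aux {α : Type*} [MeasurableSpace α] {μ : Measure α} {f g : α → ℝ}
    (h : ∀ᵐ x ∂μ, f x ≤ g x) : eInt μ f ≤ eInt μ g := by
  unfold eInt
  refine EReal.sub_le_sub ?_ ?_
  · refine EReal.coe_ennreal_le_coe_ennreal_iff.2 (lintegral_mono_ae ?_)
    filter_upwards [h] with x hx using ENNReal.ofReal_le_ofReal hx
  · refine EReal.coe_ennreal_le_coe_ennreal_iff.2 (lintegral_mono_ae ?_)
    filter_upwards [h] with x hx using ENNReal.ofReal_le_ofReal (neg_le_neg hx)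

theorem integrable_of_parts {α : Type*} [MeasurableSpace α] {μ : Measure α} {f : α → ℝ}
    (hf : Measurable f) (h1 : ∫⁻ x, ENNReal.ofReal (f x) ∂μ ≠ ⊤)
    (h2 : ∫⁻ x, ENNReal.ofReal (-f x) ∂μ ≠ ⊤) : Integrable f μ := by
  have a := integrable_toReal_of_lintegral_ne_top
    (hf.ennreal_ofReal.aemeasurable (μ := μ)) h1
  have b := integrable_toReal_of_lintegral_ne_top
    (hf.neg.ennreal_ofReal.aemeasurable (μ := μ)) h2
  refine (a.sub b).congr (Filter.Eventually.of_forall fun x => ?_)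
  simp only [Pi.sub_apply, Pi.neg_apply, ENNReal.toReal_ofReal']
  rcases le_total (f x) 0 with h | h
  · rw [max_eq_right h, max_eq_left (by linarith)]; ring
  · rw [max_eq_left h, max_eq_right (by linarith)]; ring

theorem eInt_of_integrable {α : Type*} [MeasurableSpace α] {μ : Measure α} {f : α → ℝ}
    (hf : Integrable f μ) : eInt μ f = ((∫ x, f x ∂μ : ℝ) : EReal) := by
  have h1 : ∫⁻ x, ENNReal.ofReal (f x) ∂μ ≠ ⊤ := hf.lintegral_lt_top.ne
  have h2 : ∫⁻ x, ENNReal.ofReal (-f x) ∂μ ≠ ⊤ := hf.neg.lintegral_lt_top.ne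
  rw [integral_eq_lintegral_pos_part_sub_lintegral_neg_part hf, EReal.coe_sub,
    EReal.coe_ennreal_toReal h1, EReal.coe_ennreal_toReal h2]
  rfl

theorem eInt_top {α : Type*} [MeasurableSpace α] {μ : Measure α} {f : α → ℝ}
    (h1 : ∫⁻ x, ENNReal.ofReal (f x) ∂μ = ⊤)
    (h2 : ∫⁻ x, ENNReal.ofReal (-f x) ∂μ ≠ ⊤) : eInt μ f = ⊤ := by
  unfold eInt
  rw [h1, ← EReal.coe_ennreal_toReal h2]
  simp

theorem eInt_bot {α : Type*} [MeasurableSpace α] {μ : Measure α} {f : α → ℝ}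
    (h1 : ∫⁻ x, ENNReal.ofReal (f x) ∂μ ≠ ⊤)
    (h2 : ∫⁻ x, ENNReal.ofReal (-f x) ∂μ = ⊤) : eInt μ f = ⊥ := by
  unfold eInt
  rw [h2, ← EReal.coe_ennreal_toReal h1]
  simp

theorem lint_div_le {α : Type*} [MeasurableSpace α] {μ ν : Measure α}
    [IsProbabilityMeasure μ] [IsProbabilityMeasure ν] (hac : μ ≪ ν)
    {h : α → ℝ≥0∞} (hh : Measurable h) :
    ∫⁻ x, h x / μ.rnDeriv ν x ∂μ ≤ ∫⁻ x, h x ∂ν := by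
  have hm : Measurable fun x => h x / μ.rnDeriv ν x := hh.div (Measure.measurable_rnDeriv μ ν)
  rw [← lintegral_rnDeriv_mul hac hm.aemeasurable]
  exact lintegral_mono fun x => ENNReal.mul_div_le

theorem ae_good {α : Type*} [MeasurableSpace α] {μ ν : Measure α}
    [IsProbabilityMeasure μ] [IsProbabilityMeasure ν] (hac : μ ≪ ν) :
    ∀ᵐ x ∂μ, 0 < (μ.rnDeriv ν x).toReal := by
  filter_upwards [Measure.rnDeriv_pos hac, hac.ae_le (Measure.rnDeriv_lt_top μ ν)] with x h1 h2
  exact ENNReal.toReal_pos h1.ne' h2.ne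

theorem neg_log_fin {α : Type*} [MeasurableSpace α] {μ ν : Measure α}
    [IsProbabilityMeasure μ] [IsProbabilityMeasure ν] (hac : μ ≪ ν) :
    ∫⁻ x, ENNReal.ofReal (-Real.log ((μ.rnDeriv ν x).toReal)) ∂μ ≠ ⊤ := by
  have h := lint_div_le hac (h := fun _ => 1) measurable_const
  simp only [lintegral_const, measure_univ, mul_one] at h
  refine ne_top_of_le_ne_top ENNReal.one_ne_top (le_trans (lintegral_mono_ae ?_) h)
  filter_upwards [ae_good hac] with x hx
  have h1 := Real.one_sub_inv_le_log_of_pos hx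
  have h2 : (1 : ℝ≥0∞) / μ.rnDeriv ν x = ENNReal.ofReal ((μ.rnDeriv ν x).toReal⁻¹) := by
    rw [ENNReal.ofReal_inv_of_pos hx, ENNReal.ofReal_toReal, one_div]
    rintro h; simp [h] at hx
  rw [h2]
  exact ENNReal.ofReal_le_ofReal (by linarith)

theorem upper_bound {α : Type*} [MeasurableSpace α] {μ ν : Measure α}
    [IsProbabilityMeasure μ] [IsProbabilityMeasure ν] (hac : μ ≪ ν)
    {c : α → ℝ} (hc : Measurable c) (h1 : ∫⁻ x, ENNReal.ofReal (Real.exp (c x)) ∂ν ≤ 1) :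
    IntWellDef μ c → eInt μ c ≤ eInt μ (fun x => Real.log ((μ.rnDeriv ν x).toReal)) := by
  intro _
  have hneg := neg_log_fin hac
  have hlm : Measurable fun x => Real.log ((μ.rnDeriv ν x).toReal) :=
    Real.measurable_log.comp (Measure.measurable_rnDeriv μ ν).ennreal_toReal
  by_cases hpos : ∫⁻ x, ENNReal.ofReal (Real.log ((μ.rnDeriv ν x).toReal)) ∂μ = ⊤
  · rw [eInt_top hpos hneg]; exact le_top
  have hl : Integrable (fun x => Real.log ((μ.rnDeriv ν x).toReal)) μ :=
    integrable_of_parts hlm hpos hneg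
  have hem : Measurable fun x => ENNReal.ofReal (Real.exp (c x)) := hc.exp.ennreal_ofReal
  have hG := (lint_div_le hac hem).trans h1
  have hGm : Measurable fun x => ENNReal.ofReal (Real.exp (c x)) / μ.rnDeriv ν x :=
    hem.div (Measure.measurable_rnDeriv μ ν)
  have hGi := integrable_toReal_of_lintegral_ne_top (hGm.aemeasurable (μ := μ))
    (ne_top_of_le_ne_top ENNReal.one_ne_top hG)
  have hGint : ∫ x, (ENNReal.ofReal (Real.exp (c x)) / μ.rnDeriv ν x).toReal ∂μ ≤ 1 := by
    rw [integral_toReal hGm.aemeasurable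
      (ae_lt_top hGm (ne_top_of_le_ne_top ENNReal.one_ne_top hG))]
    exact ENNReal.toReal_le_of_le_ofReal zero_le_one (by simpa using hG)
  have key : ∀ᵐ x ∂μ, c x ≤ Real.log ((μ.rnDeriv ν x).toReal) +
      (ENNReal.ofReal (Real.exp (c x)) / μ.rnDeriv ν x).toReal - 1 := by
    filter_upwards [ae_good hac] with x hx
    rw [ENNReal.toReal_div, ENNReal.toReal_ofReal (Real.exp_pos _).le]
    have := Real.log_le_sub_one_of_pos (div_pos (Real.exp_pos (c x)) hx)
    rw [Real.log_div (Real.exp_pos _).ne' hx.ne', Real.log_exp] at this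
    linarith
  have hsum : Integrable (fun x => Real.log ((μ.rnDeriv ν x).toReal) +
      (ENNReal.ofReal (Real.exp (c x)) / μ.rnDeriv ν x).toReal) μ := hl.add hGi
  have hbi : Integrable (fun x => Real.log ((μ.rnDeriv ν x).toReal) +
      (ENNReal.ofReal (Real.exp (c x)) / μ.rnDeriv ν x).toReal - 1) μ :=
    hsum.sub (integrable_const 1)
  refine (eInt_mono_aux key).trans ?_
  rw [eInt_of_integrable hbi, eInt_of_integrable hl, EReal.coe_le_coe_iff]
  rw [integral_sub hsum (integrable_const 1), integral_add hl hGi]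
  simp only [integral_const, probReal_univ, smul_eq_mul, mul_one]
  linarith

theorem lower_shift {α : Type*} [MeasurableSpace α] {μ : Measure α} [IsProbabilityMeasure μ]
    {f : α → ℝ} (hf : Measurable f) (hn : ∫⁻ x, ENNReal.ofReal (-f x) ∂μ ≠ ⊤)
    {s : EReal} (H : ∀ δ : ℝ, 0 < δ → eInt μ (fun x => f x - δ) ≤ s) : eInt μ f ≤ s := by
  by_cases hp : ∫⁻ x, ENNReal.ofReal (f x) ∂μ = ⊤
  · have h1 := H 1 one_pos
    rw [eInt_top] at h1
    · exact le_top.trans h1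
    · by_contra hne
      have : ∫⁻ x, ENNReal.ofReal (f x) ∂μ ≤ ∫⁻ x, (ENNReal.ofReal (f x - 1) + 1) ∂μ := by
        refine lintegral_mono fun x => ?_
        have := ENNReal.ofReal_add_le (p := f x - 1) (q := 1)
        simpa using this
      rw [lintegral_add_right _ measurable_const, hp] at this
      simp at this
      exact hne this
    · have : ∫⁻ x, ENNReal.ofReal (-(f x - 1)) ∂μ ≤ ∫⁻ x, (ENNReal.ofReal (-f x) + 1) ∂μ := by
        refine lintegral_mono fun x => ?_
        have := ENNReal.ofReal_add_le (p := -f x) (q := 1)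
        rw [ENNReal.ofReal_one] at this
        convert this using 2
        ring
      rw [lintegral_add_right _ measurable_const] at this
      refine ne_top_of_le_ne_top ?_ this
      simp [hn]
  · have hi := integrable_of_parts hf hp hn
    rw [eInt_of_integrable hi]
    have H' : ∀ δ : ℝ, 0 < δ → (((∫ x, f x ∂μ) - δ : ℝ) : EReal) ≤ s := by
      intro δ hδ
      have := H δ hδ
      have hs : Integrable (fun x => f x - δ) μ := hi.sub (integrable_const δ)
      rw [eInt_of_integrable hs,
        integral_sub hi (integrable_const δ)] at this
      simpa using this
    refine le_of_forall_lt fun z hz => ?_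
    obtain ⟨w, hzw, hw⟩ := EReal.lt_iff_exists_real_btwn.1 hz
    have hw' : w < ∫ x, f x ∂μ := EReal.coe_lt_coe_iff.1 hw
    have := H' ((∫ x, f x ∂μ) - w) (by linarith)
    rw [_root_.sub_sub_cancel] at this
    exact hzw.trans_le this

theorem lintegral_kernMeas {X Y : Type*} [MeasurableSpace X] [MeasurableSpace Y]
    (κ : Kernel Y X) [IsMarkovKernel κ] (Q : Measure Y) [IsProbabilityMeasure Q]
    {f : X × Y → ℝ≥0∞} (hf : Measurable f) :
    ∫⁻ z, f z ∂(kernMeas κ Q) = ∫⁻ y, ∫⁻ x, f (x, y) ∂(κ y) ∂Q := by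
  unfold kernMeas
  have hs : Measurable fun z : Y × X => f z.swap := hf.comp measurable_swap
  rw [lintegral_map hf measurable_swap, Measure.lintegral_compProd hs]
  rfl

instance kernMeas_prob {X Y : Type*} [MeasurableSpace X] [MeasurableSpace Y]
    (κ : Kernel Y X) [IsMarkovKernel κ] (Q : Measure Y) [IsProbabilityMeasure Q] :
    IsProbabilityMeasure (kernMeas κ Q) := by
  unfold kernMeas
  exact Measure.isProbabilityMeasure_map measurable_swap.aemeasurable

theorem meas_section {X Y : Type*} [MeasurableSpace X] [MeasurableSpace Y]
    (κ : Kernel Y X) [IsMarkovKernel κ] {f : X × Y → ℝ≥0∞} (hf : Measurable f) :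
    Measurable fun y => ∫⁻ x, f (x, y) ∂(κ y) :=
  (hf.comp measurable_swap).lintegral_kernel_prod_right'

/-- normalized functions integrate to one against the reference measure. -/
theorem lint_exp_one {X : Type*} [MeasurableSpace X] {ν : Measure X} {c : X → ℝ}
    (h : ∫ x, Real.exp (c x) ∂ν = 1) : ∫⁻ x, ENNReal.ofReal (Real.exp (c x)) ∂ν = 1 := by
  have hi : Integrable (fun x => Real.exp (c x)) ν := by
    by_contra hn
    rw [integral_undef hn] at h
    exact zero_ne_one h
  rw [← ofReal_integral_eq_lintegral_ofReal hi
    (Filter.Eventually.of_forall fun x => (Real.exp_pos _).le), h, ENNReal.ofReal_one]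

theorem section_one {X Y : Type*} [MeasurableSpace X] [MeasurableSpace Y]
    (κ : Kernel Y X) [IsMarkovKernel κ]
    (π : Measure (X × Y)) [IsProbabilityMeasure π]
    (Q : Measure Y) [IsProbabilityMeasure Q] (hQ : π.map Prod.snd = Q)
    (hac : π ≪ kernMeas κ Q) :
    ∀ᵐ y ∂Q, ∫⁻ x, π.rnDeriv (kernMeas κ Q) (x, y) ∂(κ y) = 1 := by
  have hm := Measure.measurable_rnDeriv π (kernMeas κ Q)
  refine ae_eq_of_forall_setLIntegral_eq_of_sigmaFinite (μ := Q)
    (g := fun _ => (1 : ℝ≥0∞)) (meas_section κ hm) measurable_const ?_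
  intro B hB _
  have hB' : MeasurableSet (Prod.snd ⁻¹' B : Set (X × Y)) := measurable_snd hB
  have e : ∫⁻ z in Prod.snd ⁻¹' B, π.rnDeriv (kernMeas κ Q) z ∂(kernMeas κ Q) = Q B := by
    rw [Measure.setLIntegral_rnDeriv hac, ← hQ, Measure.map_apply measurable_snd hB]
  rw [← lintegral_indicator hB', lintegral_kernMeas κ Q (hm.indicator hB')] at e
  rw [setLIntegral_one, ← e, ← lintegral_indicator hB]
  refine lintegral_congr fun y => ?_
  by_cases hy : y ∈ B <;> simp [Set.indicator, hy]

theorem lower_ac {X Y : Type*} [MeasurableSpace X] [MeasurableSpace Y]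
    (κ : Kernel Y X) [IsMarkovKernel κ]
    (π : Measure (X × Y)) [IsProbabilityMeasure π]
    (Q : Measure Y) [IsProbabilityMeasure Q] (hQ : π.map Prod.snd = Q)
    (hac : π ≪ kernMeas κ Q) (ε : ℝ) (hε : 0 < ε) :
    ∃ c : X × Y → ℝ, Measurable c ∧
        (∀ y, (∫ x, Real.exp (c (x, y)) ∂(κ y)) = 1) ∧ IntWellDef π c ∧
        ∀ᵐ z ∂π, Real.log ((π.rnDeriv (kernMeas κ Q) z).toReal) - Real.log (1 + ε) ≤ c z := by
  have hm := Measure.measurable_rnDeriv π (kernMeas κ Q)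
  set p := π.rnDeriv (kernMeas κ Q) with hp
  set G : Set Y := {y | ∫⁻ x, p (x, y) ∂(κ y) = 1} with hG
  have hGm : MeasurableSet G := meas_section κ hm (measurableSet_singleton 1)
  have hGae : ∀ᵐ z ∂π, z.2 ∈ G := by
    have := section_one κ π Q hQ hac
    have h2 : ∀ᵐ y ∂(π.map Prod.snd), y ∈ G := by rw [hQ]; exact this
    exact ae_of_ae_map measurable_snd.aemeasurable h2
  set q : X × Y → ℝ := fun z => if z.2 ∈ G then (p z).toReal else 1 with hq
  have hqm : Measurable q :=
    Measurable.ite (measurable_snd hGm) hm.ennreal_toReal measurable_const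
  have hq0 : ∀ z, 0 ≤ q z := by
    intro z; simp only [hq]; split_ifs
    · exact ENNReal.toReal_nonneg
    · exact zero_le_one
  have hqi : ∀ y, Integrable (fun x => q (x, y)) (κ y) ∧ ∫ x, q (x, y) ∂(κ y) = 1 := by
    intro y
    by_cases hy : y ∈ G
    · have hy' : ∫⁻ x, p (x, y) ∂(κ y) = 1 := hy
      have hpm : Measurable fun x => p (x, y) := hm.comp measurable_prodMk_right
      simp only [hq, hy, if_true]
      refine ⟨integrable_toReal_of_lintegral_ne_top hpm.aemeasurable (by simp [hy']), ?_⟩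
      rw [integral_toReal hpm.aemeasurable (ae_lt_top hpm (by simp [hy'])), hy']
      simp
    · simp [hq, hy]
  have hpos : ∀ z, 0 < (q z + ε) / (1 + ε) := fun z => by
    have := hq0 z; positivity
  refine ⟨fun z => Real.log ((q z + ε) / (1 + ε)), ?_, ?_, ?_, ?_⟩
  · exact Real.measurable_log.comp ((hqm.add_const _).div_const _)
  · intro y
    simp only [Real.exp_log (hpos _)]
    rw [integral_div, integral_add (hqi y).1 (integrable_const _), (hqi y).2]
    have hne : 1 + ε ≠ 0 := by positivity
    simp [hne]
  · right
    refine ne_top_of_le_ne_top (b := ENNReal.ofReal (-Real.log (ε / (1 + ε))))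
      ENNReal.ofReal_ne_top ?_
    calc _ ≤ ∫⁻ z, ENNReal.ofReal (-Real.log (ε / (1 + ε))) ∂π := by
          refine lintegral_mono fun z => ENNReal.ofReal_le_ofReal (neg_le_neg ?_)
          refine Real.log_le_log (by positivity) ?_
          have := hq0 z
          gcongr
          linarith
      _ = _ := by simp
  · filter_upwards [hGae, ae_good hac] with z hz hz'
    have : q z = (p z).toReal := by simp [hq, hz]
    rw [this, Real.log_div (by positivity) (by positivity)]
    have := Real.log_le_log hz' (by linarith : (p z).toReal ≤ (p z).toReal + ε)
    linarith

theorem lower_not_ac {X Y : Type*} [MeasurableSpace X] [MeasurableSpace Y]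
    (κ : Kernel Y X) [IsMarkovKernel κ]
    (π : Measure (X × Y)) [IsProbabilityMeasure π]
    (Q : Measure Y) [IsProbabilityMeasure Q] (hQ : π.map Prod.snd = Q)
    (hac : ¬ π ≪ kernMeas κ Q) : ∃ a : ℝ, 0 < a ∧ ∀ n : ℕ,
    ∃ c : X × Y → ℝ, Measurable c ∧
        (∀ y, (∫ x, Real.exp (c (x, y)) ∂(κ y)) = 1) ∧ IntWellDef π c ∧
        eInt π c = ((n * a : ℝ) : EReal) := by
  have : ∃ A, MeasurableSet A ∧ kernMeas κ Q A = 0 ∧ π A ≠ 0 := by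
    by_contra! h
    exact hac (Measure.AbsolutelyContinuous.mk h)
  obtain ⟨A, hA, hA0, hA1⟩ := this
  have hAi : Measurable (A.indicator (fun _ => (1 : ℝ≥0∞))) := measurable_const.indicator hA
  set G : Set Y := {y | ∫⁻ x, A.indicator (fun _ => (1 : ℝ≥0∞)) (x, y) ∂(κ y) = 0} with hG
  have hGm : MeasurableSet G := meas_section κ hAi (measurableSet_singleton 0)
  have hGae : ∀ᵐ z ∂π, z.2 ∈ G := by
    have h2 : ∀ᵐ y ∂(π.map Prod.snd), y ∈ G := by
      rw [hQ]
      have := lintegral_kernMeas κ Q hAi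
      rw [lintegral_indicator hA, setLIntegral_one, hA0] at this
      exact (lintegral_eq_zero_iff (meas_section κ hAi)).1 this.symm
    exact ae_of_ae_map measurable_snd.aemeasurable h2
  set B := A ∩ Prod.snd ⁻¹' G with hB
  have hBm : MeasurableSet B := hA.inter (measurable_snd hGm)
  have hBA : π B = π A := by
    refine measure_congr ?_
    filter_upwards [hGae] with z hz
    exact propext ⟨fun h => h.1, fun h => ⟨h, hz⟩⟩
  refine ⟨π.real B, ?_, fun n => ?_⟩
  · rw [measureReal_def, hBA]; exact ENNReal.toReal_pos hA1 (measure_ne_top _ _)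
  have hi : Integrable (B.indicator fun _ => (n : ℝ)) π := (integrable_const _).indicator hBm
  refine ⟨B.indicator fun _ => (n : ℝ), measurable_const.indicator hBm, ?_, ?_, ?_⟩
  · intro y
    have : ∀ᵐ x ∂(κ y), (x, y) ∉ B := by
      by_cases hy : y ∈ G
      · have h0 : ∫⁻ x, A.indicator (fun _ => (1 : ℝ≥0∞)) (x, y) ∂(κ y) = 0 := hy
        have hs : Measurable fun x => A.indicator (fun _ => (1 : ℝ≥0∞)) (x, y) :=
          hAi.comp measurable_prodMk_right
        rw [lintegral_eq_zero_iff hs] at h0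
        filter_upwards [h0] with x hx hxB
        simp [Set.indicator, hxB.1] at hx
      · exact Filter.Eventually.of_forall fun x hx => hy hx.2
    rw [integral_congr_ae (g := fun _ => (1 : ℝ))]
    · simp
    · filter_upwards [this] with x hx
      simp [Set.indicator, hx]
  · left
    exact hi.lintegral_lt_top.ne
  · rw [eInt_of_integrable hi, integral_indicator hBm]
    simp [mul_comm]

theorem main_sup {X Y : Type*} [MeasurableSpace X] [MeasurableSpace Y]
    (κ : Kernel Y X) [IsMarkovKernel κ]
    (π : Measure (X × Y)) [IsProbabilityMeasure π]
    (Q : Measure Y) (hQ : π.map Prod.snd = Q) :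
    sSup { r : EReal | ∃ c : X × Y → ℝ, Measurable c ∧
        (∀ y, (∫ x, Real.exp (c (x, y)) ∂(κ y)) = 1) ∧ IntWellDef π c ∧ r = eInt π c }
      = KL π (kernMeas κ Q) := by
  have : IsProbabilityMeasure Q :=
    hQ ▸ Measure.isProbabilityMeasure_map measurable_snd.aemeasurable
  unfold KL
  split_ifs with hac
  · apply le_antisymm
    · refine sSup_le ?_
      rintro r ⟨c, hc, hn, hw, rfl⟩
      refine upper_bound hac hc ?_ hw
      rw [lintegral_kernMeas κ Q hc.exp.ennreal_ofReal]
      simp [fun y => lint_exp_one (hn y)]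
    · refine lower_shift (Real.measurable_log.comp
        (Measure.measurable_rnDeriv π (kernMeas κ Q)).ennreal_toReal) (neg_log_fin hac) ?_
      intro δ hδ
      obtain ⟨c, hc, hn, hw, hle⟩ := lower_ac κ π Q hQ hac (Real.exp δ - 1)
        (by have := Real.add_one_lt_exp hδ.ne'; linarith)
      refine le_trans (eInt_mono_aux ?_) (le_sSup ⟨c, hc, hn, hw, rfl⟩)
      filter_upwards [hle] with z hz
      simpa using hz
  · obtain ⟨a, ha, h⟩ := lower_not_ac κ π Q hQ hac
    refine (EReal.eq_top_iff_forall_lt _).2 fun y => ?_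
    obtain ⟨n, hn⟩ := exists_nat_gt (y / a)
    obtain ⟨c, hc, hnn, hw, he⟩ := h n
    refine lt_of_lt_of_le ?_ (le_sSup ⟨c, hc, hnn, hw, rfl⟩)
    rw [he, EReal.coe_lt_coe_iff]
    exact (div_lt_iff₀ ha).1 hn

/-- the supremum of `∫ c dπ` over `ν̂`-normalized measurable functions with
well-defined integral equals `D_KL(π | ν̂ dQ)`, where `Q` is the `y`-marginal of `π`;
equivalently `H^{ν̂}(π) = −D_KL(π | ν̂ dQ)`.  In particular, for the constant kernel
`ν̂^y = ν`, `H^ν(π) = −D_KL(π | ν × Q)`. -/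
theorem statement1 {X Y : Type*} [MeasurableSpace X] [MeasurableSpace Y]
    (κ : Kernel Y X) [IsMarkovKernel κ]
    (π : Measure (X × Y)) [IsProbabilityMeasure π]
    (Q : Measure Y) (hQ : π.map Prod.snd = Q) :
    (sSup { r : EReal | ∃ c : X × Y → ℝ, Measurable c ∧
        (∀ y, (∫ x, Real.exp (c (x, y)) ∂(κ y)) = 1) ∧ IntWellDef π c ∧ r = eInt π c }
      = KL π (kernMeas κ Q))
    ∧ Hker κ π = - KL π (kernMeas κ Q)
    ∧ ∀ ν : Measure X, IsProbabilityMeasure ν →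
        Hker (Kernel.const Y ν) π = - KL π (ν.prod Q) := by
  refine ⟨main_sup κ π Q hQ, ?_, ?_⟩
  · unfold Hker
    rw [main_sup κ π Q hQ]
  · intro ν hν
    have : IsProbabilityMeasure Q :=
      hQ ▸ Measure.isProbabilityMeasure_map measurable_snd.aemeasurable
    unfold Hker
    rw [main_sup (Kernel.const Y ν) π Q hQ]
    unfold kernMeas
    rw [Measure.compProd_const, Measure.prod_swap]

end
end

section
/- Let X and Y be measurable spaces, ν̂ a probability kernel from Y to X, and π a probability measure on X × Y. Suppose J₀ is a ν̂-Jacobian of π, i.e. ∬ f(x,y) J₀(x,y) dν̂^y(x) dπ(x,y) = ∫ f dπ for every bounded measurable f : X × Y → ℝ. Then H^{ν̂}(π) = −∫ log(J₀) dπ; that is, the supremum defining −H^{ν̂}(π) over ν̂-Jacobians is attained at J₀. -/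
open MeasureTheory ENNReal ProbabilityTheory

noncomputable section
open scoped Classical

lemma aux_arith (Ap An Bp Bn : ℝ≥0∞) (d : ℝ) (hd : 0 ≤ d) (hB : Bn ≠ ⊤)
    (h : Ap + Bn ≤ Bp + An + ENNReal.ofReal d) :
    (Ap : EReal) - (An : EReal) ≤ ((Bp : EReal) - (Bn : EReal)) + (d : EReal) := by
  by_cases hAn : An = ⊤
  · subst hAn; simp
  by_cases hBp : Bp = ⊤
  · subst hBp
    lift Bn to NNReal using hB
    have : ((⊤ : ℝ≥0∞) : EReal) - ((Bn : ℝ≥0∞) : EReal) = ⊤ := EReal.top_sub_coe (Bn : ℝ)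
    rw [this, EReal.top_add_coe]
    exact le_top
  have hAp : Ap ≠ ⊤ := by
    intro hA
    subst hA
    rw [top_add, top_le_iff] at h
    simp [hAn, hBp] at h
  have h' := ENNReal.toReal_mono (by simp [hAn, hBp]) h
  rw [ENNReal.toReal_add hAp hB, ENNReal.toReal_add (by simp [hAn, hBp]) (by simp),
    ENNReal.toReal_add hBp hAn, ENNReal.toReal_ofReal hd] at h'
  rw [← EReal.coe_ennreal_toReal hAp, ← EReal.coe_ennreal_toReal hAn,
    ← EReal.coe_ennreal_toReal hBp, ← EReal.coe_ennreal_toReal hB]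
  norm_cast
  linarith

lemma aux_eps (b S : EReal) (h : ∀ d : ℝ, 0 < d → b ≤ S + (d : EReal)) : b ≤ S := by
  induction S with
  | bot => simpa using h 1 one_pos
  | top => exact le_top
  | coe s =>
    refine EReal.le_of_forall_lt_iff_le.1 fun z hz => ?_
    have hz' : s < z := by exact_mod_cast hz
    have := h (z - s) (by linarith)
    rwa [← EReal.coe_add, add_sub_cancel] at this

lemma aux_posneg {u v w : ℝ} (h : u ≤ v + w) (hw : 0 ≤ w) :
    ENNReal.ofReal u + ENNReal.ofReal (-v) ≤
      ENNReal.ofReal v + ENNReal.ofReal (-u) + ENNReal.ofReal w := by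
  have e : ∀ t : ℝ, ENNReal.ofReal t = ENNReal.ofReal (max t 0) := by
    intro t; rcases le_total t 0 with ht | ht <;> simp [ht]
  rw [e u, e (-v), e v, e (-u), ← ENNReal.ofReal_add (by simp) (by simp),
    ← ENNReal.ofReal_add (by simp) (by simp), ← ENNReal.ofReal_add (by positivity) hw]
  apply ENNReal.ofReal_le_ofReal
  have h1 : ∀ t : ℝ, max t 0 - max (-t) 0 = t := by
    intro t; rcases le_total t 0 with ht | ht <;> simp [ht]
  have := h1 u
  have := h1 v
  linarith

lemma aux_one {X : Type*} [MeasurableSpace X] (μ : Measure X) (g : X → ℝ)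
    (h0 : ∀ x, 0 ≤ g x) (h : ∫ x, g x ∂μ = 1) :
    Integrable g μ ∧ ∫⁻ x, ENNReal.ofReal (g x) ∂μ = 1 := by
  have hi : Integrable g μ := by
    by_contra hn
    rw [integral_undef hn] at h
    exact zero_ne_one h
  refine ⟨hi, ?_⟩
  rw [← ofReal_integral_eq_lintegral_ofReal hi (Filter.Eventually.of_forall h0), h]
  simp

lemma aux_lint {X Y : Type*} [MeasurableSpace X] [MeasurableSpace Y]
    (κ : Kernel Y X) [IsMarkovKernel κ]
    (pi : Measure (X × Y)) [IsProbabilityMeasure pi] (g : X × Y → ℝ≥0∞) (hg : Measurable g) :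
    ∫⁻ p, g p ∂(kernMeas κ pi.snd) = ∫⁻ p, ∫⁻ x, g (x, p.2) ∂(κ p.2) ∂pi := by
  unfold kernMeas
  rw [lintegral_map hg measurable_swap,
    Measure.lintegral_compProd (f := fun a => g a.swap) (hg.comp measurable_swap), Measure.snd,
    lintegral_map (f := fun y => ∫⁻ x, g (Prod.swap (y, x)) ∂(κ y))
      (Measurable.lintegral_kernel_prod_right' (κ := κ) (hg.comp measurable_swap))
      measurable_snd]
  rfl

lemma aux_density {X Y : Type*} [MeasurableSpace X] [MeasurableSpace Y]
    (κ : Kernel Y X) [IsMarkovKernel κ]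
    (pi : Measure (X × Y)) [IsProbabilityMeasure pi]
    (J₀ : X × Y → ℝ) (hm : Measurable J₀) (h0 : ∀ p, 0 ≤ J₀ p)
    (hnorm : ∀ y, (∫ x, J₀ (x, y) ∂(κ y)) = 1)
    (hjac : ∀ f : X × Y → ℝ, Measurable f → (∃ C, ∀ p, |f p| ≤ C) →
      (∫ p, (∫ x, f (x, p.2) * J₀ (x, p.2) ∂(κ p.2)) ∂pi) = ∫ p, f p ∂pi) :
    pi = (kernMeas κ pi.snd).withDensity (fun p => ENNReal.ofReal (J₀ p)) := by
  ext A hA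
  have hJm : Measurable fun p => ENNReal.ofReal (J₀ p) := hm.ennreal_ofReal
  have hgm : Measurable (A.indicator fun p => ENNReal.ofReal (J₀ p)) := hJm.indicator hA
  rw [withDensity_apply _ hA, ← lintegral_indicator hA, aux_lint κ pi _ hgm]
  have hfm : Measurable (A.indicator (fun _ => (1:ℝ))) := measurable_const.indicator hA
  have hj := hjac (A.indicator (fun _ => (1:ℝ))) hfm
    ⟨1, fun p => by by_cases hp : p ∈ A <;> simp [hp]⟩
  rw [integral_indicator_const _ hA] at hj
  have hle : ∀ y, ∫⁻ x, A.indicator (fun p => ENNReal.ofReal (J₀ p)) (x, y) ∂(κ y) ≤ 1 := by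
    intro y
    rw [← (aux_one (κ y) (fun x => J₀ (x, y)) (fun x => h0 _) (hnorm y)).2]
    exact lintegral_mono fun x => Set.indicator_le_self _ _ _
  have hI : ∀ p : X × Y, (∫ x, A.indicator (fun _ => (1:ℝ)) (x, p.2) * J₀ (x, p.2) ∂(κ p.2)) =
      (∫⁻ x, A.indicator (fun p => ENNReal.ofReal (J₀ p)) (x, p.2) ∂(κ p.2)).toReal := by
    intro p
    rw [integral_eq_lintegral_of_nonneg_ae]
    · congr 1
      refine lintegral_congr fun x => ?_
      by_cases hx : (x, p.2) ∈ A <;> simp [hx]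
    · refine Filter.Eventually.of_forall fun x => ?_
      exact mul_nonneg (Set.indicator_nonneg (fun _ _ => zero_le_one) _) (h0 _)
    · exact ((hfm.mul hm).comp measurable_prodMk_right).aestronglyMeasurable
  have hmL : Measurable fun p : X × Y =>
      ∫⁻ x, A.indicator (fun p => ENNReal.ofReal (J₀ p)) (x, p.2) ∂(κ p.2) :=
    (Measurable.lintegral_kernel_prod_right' (κ := κ) (hgm.comp measurable_swap)).comp
      measurable_snd
  simp_rw [hI] at hj
  rw [integral_toReal hmL.aemeasurable
    (Filter.Eventually.of_forall fun p => (hle p.2).trans_lt one_lt_top)] at hj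
  have hfin : ∫⁻ p, ∫⁻ x, A.indicator (fun p => ENNReal.ofReal (J₀ p)) (x, p.2) ∂(κ p.2) ∂pi
      ≠ ⊤ := by
    refine ne_top_of_le_ne_top (b := 1) one_ne_top ?_
    calc _ ≤ ∫⁻ p, 1 ∂pi := lintegral_mono fun p => hle p.2
      _ = 1 := by simp
  rw [smul_eq_mul, mul_one, Measure.real] at hj
  exact ((ENNReal.toReal_eq_toReal_iff' hfin (measure_ne_top _ _)).1 hj).symm

/-- if `J₀` is a `ν̂`-Jacobian of `π`, i.e. a `ν̂`-Jacobian such that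
`∬ f(x,y) J₀(x,y) dν̂^y(x) dπ(x,y) = ∫ f dπ` for every bounded measurable `f`, then
`H^{ν̂}(π) = −∫ log J₀ dπ`: the supremum defining `−H^{ν̂}(π)` is attained at `J₀`. -/
theorem statement5 {X Y : Type*} [MeasurableSpace X] [MeasurableSpace Y]
    (κ : Kernel Y X) [IsMarkovKernel κ]
    (pi : Measure (X × Y)) [IsProbabilityMeasure pi]
    (J₀ : X × Y → ℝ) (hm : Measurable J₀) (h0 : ∀ p, 0 ≤ J₀ p)
    (hnorm : ∀ y, (∫ x, J₀ (x, y) ∂(κ y)) = 1)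
    (hjac : ∀ f : X × Y → ℝ, Measurable f → (∃ C, ∀ p, |f p| ≤ C) →
      (∫ p, (∫ x, f (x, p.2) * J₀ (x, p.2) ∂(κ p.2)) ∂pi) = ∫ p, f p ∂pi) :
    Hker κ pi = - eInt pi (fun p => Real.log (J₀ p)) := by
  have hden := aux_density κ pi J₀ hm h0 hnorm hjac
  set M := kernMeas κ pi.snd with hM
  have hJm : Measurable fun p => ENNReal.ofReal (J₀ p) := hm.ennreal_ofReal
  have hpos : ∀ᵐ p ∂pi, 0 < J₀ p := by
    rw [hden, ae_withDensity_iff hJm]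
    refine Filter.Eventually.of_forall fun p hp => ?_
    simpa using hp
  have hdiv : ∀ g : X × Y → ℝ, Measurable g → (∀ p, 0 ≤ g p) →
      (∀ y, (∫ x, g (x, y) ∂(κ y)) = 1) → ∫⁻ p, ENNReal.ofReal (g p / J₀ p) ∂pi ≤ 1 := by
    intro g hg hg0 hg1
    calc ∫⁻ p, ENNReal.ofReal (g p / J₀ p) ∂pi
        = ∫⁻ p, ENNReal.ofReal (J₀ p) * ENNReal.ofReal (g p / J₀ p) ∂M := by
          conv_lhs => rw [hden]
          have hq : Measurable fun p => ENNReal.ofReal (g p / J₀ p) := (hg.div hm).ennreal_ofReal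
          rw [lintegral_withDensity_eq_lintegral_mul _ hJm hq]
          rfl
      _ ≤ ∫⁻ p, ENNReal.ofReal (g p) ∂M := by
          refine lintegral_mono fun p => ?_
          rw [← ENNReal.ofReal_mul (h0 p)]
          refine ENNReal.ofReal_le_ofReal ?_
          rcases (h0 p).eq_or_lt with hp | hp
          · rw [← hp, zero_mul]; exact hg0 p
          · rw [mul_div_cancel₀ _ hp.ne']
      _ = 1 := by
          rw [hM, aux_lint κ pi _ hg.ennreal_ofReal]
          have : ∀ y, ∫⁻ x, ENNReal.ofReal (g (x, y)) ∂(κ y) = 1 := fun y =>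
            (aux_one (κ y) (fun x => g (x, y)) (fun x => hg0 _) (hg1 y)).2
          simp [this]
  have hBn : ∫⁻ p, ENNReal.ofReal (-Real.log (J₀ p)) ∂pi ≠ ⊤ := by
    refine ne_top_of_le_ne_top (b := 1) one_ne_top ?_
    refine le_trans (lintegral_mono_ae ?_) (hdiv (fun _ => 1) measurable_const
      (fun _ => zero_le_one) (fun y => by simp))
    filter_upwards [hpos] with p hp
    refine ENNReal.ofReal_le_ofReal ?_
    have := Real.log_le_sub_one_of_pos (inv_pos.2 hp)
    rw [Real.log_inv] at this
    rw [one_div]; linarith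
  have hlm : Measurable fun p => Real.log (J₀ p) := hm.log
  unfold Hker
  congr 1
  apply le_antisymm
  · refine sSup_le ?_
    rintro r ⟨c, hc, hc1, -, rfl⟩
    have key := hdiv (fun p => Real.exp (c p)) hc.exp (fun p => (Real.exp_pos _).le) hc1
    have := aux_arith (∫⁻ p, ENNReal.ofReal (c p) ∂pi) (∫⁻ p, ENNReal.ofReal (-c p) ∂pi)
      (∫⁻ p, ENNReal.ofReal (Real.log (J₀ p)) ∂pi)
      (∫⁻ p, ENNReal.ofReal (-Real.log (J₀ p)) ∂pi) 0 le_rfl hBn ?_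
    · simpa [eInt] using this
    rw [ENNReal.ofReal_zero, add_zero]
    refine (ENNReal.add_le_add_iff_right one_ne_top).1 ?_
    calc _ = ∫⁻ p, (ENNReal.ofReal (c p) + ENNReal.ofReal (-Real.log (J₀ p)) + 1) ∂pi := by
          rw [lintegral_add_right _ measurable_const, lintegral_add_left hc.ennreal_ofReal]
          simp
      _ ≤ ∫⁻ p, (ENNReal.ofReal (Real.log (J₀ p)) + ENNReal.ofReal (-c p) +
            ENNReal.ofReal (Real.exp (c p) / J₀ p)) ∂pi := by
          refine lintegral_mono_ae ?_
          filter_upwards [hpos] with p hp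
          have hq : 0 < Real.exp (c p) / J₀ p := div_pos (Real.exp_pos _) hp
          have h1 := Real.log_le_sub_one_of_pos hq
          rw [Real.log_div (Real.exp_pos _).ne' hp.ne', Real.log_exp] at h1
          have e : ∀ t : ℝ, ENNReal.ofReal t = ENNReal.ofReal (max t 0) := by
            intro t; rcases le_total t 0 with ht | ht <;> simp [ht]
          have h2 : ∀ t : ℝ, max t 0 - max (-t) 0 = t := by
            intro t; rcases le_total t 0 with ht | ht <;> simp [ht]
          rw [e (c p), e (-Real.log (J₀ p)), e (Real.log (J₀ p)), e (-c p), ← ENNReal.ofReal_one,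
            ← ENNReal.ofReal_add (by simp) (by simp), ← ENNReal.ofReal_add (by positivity) (by simp),
            ← ENNReal.ofReal_add (by simp) (by simp),
            ← ENNReal.ofReal_add (by positivity) hq.le]
          apply ENNReal.ofReal_le_ofReal
          have := h2 (c p)
          have := h2 (Real.log (J₀ p))
          linarith
      _ ≤ _ := by
          have hq : Measurable fun p => ENNReal.ofReal (Real.exp (c p) / J₀ p) :=
            (hc.exp.div hm).ennreal_ofReal
          rw [lintegral_add_right _ hq,
            lintegral_add_left hlm.ennreal_ofReal]
          gcongr
  · refine aux_eps _ _ fun d hd => ?_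
    have he1 : Real.exp (-d) < 1 := by
      rw [← Real.exp_zero]
      exact Real.exp_lt_exp.2 (by linarith)
    have he0 := Real.exp_pos (-d)
    set a := Real.exp (-d) with ha
    have hJ'pos : ∀ p, 0 < a * J₀ p + (1 - a) := fun p => by
      have := mul_nonneg he0.le (h0 p); linarith
    have hcm : Measurable fun p => Real.log (a * J₀ p + (1 - a)) :=
      ((hm.const_mul a).add_const _).log
    have hneg : ∫⁻ p, ENNReal.ofReal (-Real.log (a * J₀ p + (1 - a))) ∂pi ≠ ⊤ := by
      refine ne_top_of_le_ne_top (b := ENNReal.ofReal (-Real.log (1 - a))) ofReal_ne_top ?_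
      calc _ ≤ ∫⁻ p, ENNReal.ofReal (-Real.log (1 - a)) ∂pi := by
            refine lintegral_mono fun p => ENNReal.ofReal_le_ofReal (neg_le_neg ?_)
            refine Real.log_le_log (by linarith) ?_
            have := mul_nonneg he0.le (h0 p); linarith
        _ = _ := by simp
    have hmem : eInt pi (fun p => Real.log (a * J₀ p + (1 - a))) ≤
        sSup { r : EReal | ∃ c : X × Y → ℝ, Measurable c ∧
      (∀ y, (∫ x, Real.exp (c (x, y)) ∂(κ y)) = 1) ∧ IntWellDef pi c ∧ r = eInt pi c } := by
      refine le_sSup ⟨_, hcm, fun y => ?_, Or.inr hneg, rfl⟩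
      simp_rw [Real.exp_log (hJ'pos _)]
      have hi := (aux_one (κ y) (fun x => J₀ (x, y)) (fun x => h0 _) (hnorm y)).1
      rw [integral_add (hi.const_mul a) (integrable_const _), integral_const_mul, hnorm]
      simp
    refine le_trans ?_ (add_le_add_left hmem _)
    refine aux_arith _ _ _ _ d hd.le hneg ?_
    calc _ = ∫⁻ p, (ENNReal.ofReal (Real.log (J₀ p)) +
            ENNReal.ofReal (-Real.log (a * J₀ p + (1 - a)))) ∂pi := by
          rw [lintegral_add_left hlm.ennreal_ofReal]
      _ ≤ ∫⁻ p, (ENNReal.ofReal (Real.log (a * J₀ p + (1 - a))) +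
            ENNReal.ofReal (-Real.log (J₀ p)) + ENNReal.ofReal d) ∂pi := by
          refine lintegral_mono_ae ?_
          filter_upwards [hpos] with p hp
          refine aux_posneg ?_ hd.le
          have h1 : Real.log (a * J₀ p) ≤ Real.log (a * J₀ p + (1 - a)) :=
            Real.log_le_log (mul_pos he0 hp) (by linarith)
          rw [Real.log_mul he0.ne' hp.ne', ha, Real.log_exp] at h1
          linarith
      _ = _ := by
          rw [lintegral_add_right _ measurable_const, lintegral_add_left hcm.ennreal_ofReal]
          simp

end
end

section
/- Let X and Y be measurable spaces, ν̂ a probability kernel from Y to X, and π a probability measure on X × Y with y-marginal Q. If π is not absolutely continuous with respect to the measure ν̂ dQ, then H^{ν̂}(π) = −∞; that is, the supremum of ∫ c dπ over ν̂-normalized measurable functions c is +∞. -/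
open MeasureTheory ENNReal ProbabilityTheory

noncomputable section
open scoped Classical

/-- if `π` is not absolutely continuous with respect to `ν̂ dQ` (where `Q` is the
`y`-marginal of `π`), then `H^{ν̂}(π) = −∞`, i.e. the supremum of `∫ c dπ` over `ν̂`-normalized
measurable functions is `+∞`. -/
theorem statement6 {X Y : Type*} [MeasurableSpace X] [MeasurableSpace Y]
    (κ : Kernel Y X) [IsMarkovKernel κ]
    (pi : Measure (X × Y)) [IsProbabilityMeasure pi]
    (Q : Measure Y) (hQ : pi.map Prod.snd = Q)
    (h : ¬ pi ≪ kernMeas κ Q) :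
    Hker κ pi = ⊥
    ∧ sSup { r : EReal | ∃ c : X × Y → ℝ, Measurable c ∧
        (∀ y, (∫ x, Real.exp (c (x, y)) ∂(κ y)) = 1) ∧ IntWellDef pi c ∧ r = eInt pi c }
      = ⊤ := by
  have key : sSup { r : EReal | ∃ c : X × Y → ℝ, Measurable c ∧
        (∀ y, (∫ x, Real.exp (c (x, y)) ∂(κ y)) = 1) ∧ IntWellDef pi c ∧ r = eInt pi c }
      = ⊤ := by
    obtain ⟨A, hA, hA0, hApos⟩ : ∃ A : Set (X × Y), MeasurableSet A ∧ kernMeas κ Q A = 0 ∧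
        pi A ≠ 0 := by
      by_contra hcon
      push Not at hcon
      exact h (Measure.AbsolutelyContinuous.mk fun s hs h0 => hcon s hs h0)
    have hQp : IsProbabilityMeasure Q := by
      rw [← hQ]; exact Measure.isProbabilityMeasure_map measurable_snd.aemeasurable
    have hAs : MeasurableSet (Prod.swap ⁻¹' A : Set (Y × X)) := measurable_swap hA
    have hm : Measurable fun y => κ y (Prod.mk y ⁻¹' (Prod.swap ⁻¹' A)) :=
      Kernel.measurable_kernel_prodMk_left hAs
    have hae : (fun y => κ y (Prod.mk y ⁻¹' (Prod.swap ⁻¹' A))) =ᵐ[Q] 0 := by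
      rw [kernMeas, Measure.map_apply measurable_swap hA, Measure.compProd_apply hAs,
        lintegral_eq_zero_iff hm] at hA0
      exact hA0
    let G : Set Y := {y | κ y (Prod.mk y ⁻¹' (Prod.swap ⁻¹' A)) = 0}
    have hG : MeasurableSet G := hm (measurableSet_singleton 0)
    have hGpi : ∀ᵐ p ∂pi, p.2 ∈ G := by
      have : ∀ᵐ y ∂(pi.map Prod.snd), y ∈ G := by rw [hQ]; exact hae
      exact ae_of_ae_map measurable_snd.aemeasurable this
    let B : Set (X × Y) := A ∩ Prod.snd ⁻¹' G
    have hB : MeasurableSet B := hA.inter (measurable_snd hG)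
    have hBpi : pi B ≠ 0 := by
      have : pi B = pi A := by
        apply measure_congr
        filter_upwards [hGpi] with p hp
        apply propext
        exact ⟨fun q => q.1, fun q => ⟨q, hp⟩⟩
      rwa [this]
    have hBsec : ∀ y, ∀ᵐ x ∂(κ y), (x, y) ∉ B := by
      intro y
      by_cases hy : y ∈ G
      · have h0 : κ y (Prod.mk y ⁻¹' (Prod.swap ⁻¹' A)) = 0 := hy
        filter_upwards [measure_eq_zero_iff_ae_notMem.1 h0] with x hx hxB
        exact hx hxB.1
      · exact Filter.Eventually.of_forall fun x hx => hy hx.2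
    rw [sSup_eq_top]
    intro b hb
    have hpos : 0 < (pi B).toReal := ENNReal.toReal_pos hBpi (measure_ne_top _ _)
    obtain ⟨t, ht0, htb⟩ : ∃ t : ℝ, 0 ≤ t ∧ b < ((t * (pi B).toReal : ℝ) : EReal) := by
      obtain ⟨s, hs, -⟩ := EReal.lt_iff_exists_real_btwn.1 hb
      refine ⟨max s 0 / (pi B).toReal, by positivity, ?_⟩
      rw [div_mul_cancel₀ _ hpos.ne']
      exact hs.trans_le (EReal.coe_le_coe_iff.2 (le_max_left _ _))
    let c : X × Y → ℝ := B.indicator fun _ => t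
    have hc0 : ∀ p, 0 ≤ c p := fun p => Set.indicator_nonneg (fun _ _ => ht0) p
    have hneg : ∫⁻ p, ENNReal.ofReal (-c p) ∂pi = 0 := by
      simp [ENNReal.ofReal_of_nonpos, hc0]
    have hposI : ∫⁻ p, ENNReal.ofReal (c p) ∂pi = ENNReal.ofReal (t * (pi B).toReal) := by
      have : (fun p => ENNReal.ofReal (c p)) = B.indicator fun _ => ENNReal.ofReal t := by
        funext p
        by_cases hp : p ∈ B <;> simp [c, hp]
      rw [this, lintegral_indicator_const hB, ENNReal.ofReal_mul ht0,
        ENNReal.ofReal_toReal (measure_ne_top _ _)]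
    refine ⟨eInt pi c, ⟨c, measurable_const.indicator hB, ?_, Or.inr (by simp [hneg]), rfl⟩, ?_⟩
    · intro y
      have : (fun x => Real.exp (c (x, y))) =ᵐ[κ y] fun _ => (1 : ℝ) := by
        filter_upwards [hBsec y] with x hx
        simp [c, hx]
      rw [integral_congr_ae this]
      simp
    · rw [eInt, hneg, hposI, EReal.coe_ennreal_ofReal, max_eq_left (by positivity)]
      simpa using htb
  refine ⟨?_, key⟩
  rw [Hker, key]
  rfl

end
end

section
/- Let X and Y be measurable spaces, ν a probability measure on X, and P a probability measure on X with P ≪ ν. Let Q be any probability measure on Y and π any probability measure on X × Y with x-marginal P. Then: (1) H^ν(π) ≤ S^ν(P); and (2) S^ν(P) = H^ν(P × Q), where P × Q is the product measure on X × Y. -/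
open MeasureTheory ENNReal ProbabilityTheory

noncomputable section
open scoped Classical

/-- Candidates on `X` pull back to candidates on `X × Y`. -/
theorem Hnu_le_SEnt_aux {X Y : Type*} [MeasurableSpace X] [MeasurableSpace Y]
    (ν P : Measure X) (pi : Measure (X × Y)) (hP : pi.map Prod.fst = P) :
    Hnu ν pi ≤ SEnt ν P := by
  unfold Hnu SEnt
  rw [EReal.neg_le_neg_iff]
  apply sSup_le_sSup
  rintro r ⟨c, hc, h1, hw, rfl⟩
  have e1 : ∫⁻ x, ENNReal.ofReal (c x) ∂P = ∫⁻ z, ENNReal.ofReal (c z.1) ∂pi := by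
    rw [← hP, lintegral_map (by fun_prop) measurable_fst]
  have e2 : ∫⁻ x, ENNReal.ofReal (-c x) ∂P = ∫⁻ z, ENNReal.ofReal (-c z.1) ∂pi := by
    rw [← hP, lintegral_map (by fun_prop) measurable_fst]
  refine ⟨fun z => c z.1, by fun_prop, fun _ => h1, ?_, ?_⟩
  · unfold IntWellDef at hw ⊢
    rwa [← e1, ← e2]
  · unfold eInt
    rw [e1, e2]

/-- Slices `c(·, y)` of candidates on `X × Y` are candidates on `X` for almost every `y`. -/
theorem SEnt_le_Hnu_prod_aux {X Y : Type*} [MeasurableSpace X] [MeasurableSpace Y]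
    (ν P : Measure X) [IsProbabilityMeasure ν] [IsProbabilityMeasure P]
    (Q : Measure Y) [IsProbabilityMeasure Q] :
    SEnt ν P ≤ Hnu ν (P.prod Q) := by
  unfold Hnu SEnt
  rw [EReal.neg_le_neg_iff]
  set s : EReal := sSup { r : EReal | ∃ c : X → ℝ, Measurable c ∧
    (∫ x, Real.exp (c x) ∂ν) = 1 ∧ IntWellDef P c ∧ r = eInt P c } with hs
  have hs0 : 0 ≤ s := by
    apply le_sSup
    exact ⟨fun _ => 0, by fun_prop, by simp, by simp [IntWellDef], by simp [eInt]⟩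
  apply sSup_le
  rintro r ⟨c, hc, h1, hw, rfl⟩
  unfold eInt
  have eF : ∫⁻ z, ENNReal.ofReal (c z) ∂(P.prod Q)
      = ∫⁻ y, ∫⁻ x, ENNReal.ofReal (c (x, y)) ∂P ∂Q :=
    lintegral_prod_symm' _ (by fun_prop)
  have eG : ∫⁻ z, ENNReal.ofReal (-c z) ∂(P.prod Q)
      = ∫⁻ y, ∫⁻ x, ENNReal.ofReal (-c (x, y)) ∂P ∂Q :=
    lintegral_prod_symm' _ (by fun_prop)
  have hGm : Measurable fun y => ∫⁻ x, ENNReal.ofReal (-c (x, y)) ∂P :=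
    Measurable.lintegral_prod_left' (f := fun z : X × Y => ENNReal.ofReal (-c z)) (by fun_prop)
  by_cases hG : ∫⁻ z, ENNReal.ofReal (-c z) ∂(P.prod Q) = ⊤
  · rw [hG, EReal.coe_ennreal_top, EReal.sub_top]
    exact bot_le
  have hGae := ae_lt_top hGm (by rwa [← eG])
  have key : ∀ᵐ y ∂Q, ∫⁻ x, ENNReal.ofReal (c (x, y)) ∂P
      ≤ s.toENNReal + ∫⁻ x, ENNReal.ofReal (-c (x, y)) ∂P := by
    filter_upwards [hGae] with y hy
    have hle : eInt P (fun x => c (x, y)) ≤ s :=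
      le_sSup ⟨fun x => c (x, y), by fun_prop, h1 y, Or.inr hy.ne, rfl⟩
    unfold eInt at hle
    rw [EReal.sub_le_iff_le_add (Or.inl (by simp)) (Or.inl (by simpa using hy.ne))] at hle
    rw [← EReal.coe_ennreal_le_coe_ennreal_iff, EReal.coe_ennreal_add,
      EReal.coe_toENNReal hs0]
    exact hle
  have hint := lintegral_mono_ae key
  rw [lintegral_add_left measurable_const, lintegral_const, measure_univ, mul_one,
    ← eF, ← eG] at hint
  rw [EReal.sub_le_iff_le_add (Or.inl (by simp)) (Or.inl (by simpa using hG))]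
  rw [← EReal.coe_ennreal_le_coe_ennreal_iff, EReal.coe_ennreal_add,
      EReal.coe_toENNReal hs0] at hint
  exact hint

/-- for `P ≪ ν`, (1) `H^ν(π) ≤ S^ν(P)` whenever `π` has `x`-marginal `P`, and
(2) `S^ν(P) = H^ν(P × Q)` for any probability `Q` on `Y`. -/
theorem statement7 {X Y : Type*} [MeasurableSpace X] [MeasurableSpace Y]
    (ν P : Measure X) [IsProbabilityMeasure ν] [IsProbabilityMeasure P]
    (Q : Measure Y) [IsProbabilityMeasure Q]
    (pi : Measure (X × Y)) [IsProbabilityMeasure pi]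
    (hac : P ≪ ν) (hP : pi.map Prod.fst = P) :
    Hnu ν pi ≤ SEnt ν P ∧ SEnt ν P = Hnu ν (P.prod Q) := by
  refine ⟨Hnu_le_SEnt_aux ν P pi hP, le_antisymm (SEnt_le_Hnu_prod_aux ν P Q) ?_⟩
  exact Hnu_le_SEnt_aux ν P (P.prod Q) (by simp [Measure.map_fst_prod])

end
end

section
/- Let X and Y be measurable spaces and ν̂ a probability kernel from Y to X. Then: (1) H^{ν̂} is concave, i.e. for probability measures π₁, π₂ on X × Y and t ∈ [0,1], H^{ν̂}(t π₁ + (1−t) π₂) ≥ t H^{ν̂}(π₁) + (1−t) H^{ν̂}(π₂); and (2) H^{ν̂} is upper semicontinuous in the following sense: if (π_n) and π are probability measures on X × Y such that ∫ f dπ_n → ∫ f dπ for every bounded measurable function f on X × Y, then limsup_n H^{ν̂}(π_n) ≤ H^{ν̂}(π). -/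
open MeasureTheory ENNReal ProbabilityTheory
open scoped NNReal

noncomputable section
open scoped Classical

lemma s8_eInt_of_integrable {α : Type*} [MeasurableSpace α] (μ : Measure α) (f : α → ℝ)
    (hf : Integrable f μ) : eInt μ f = ((∫ x, f x ∂μ : ℝ) : EReal) := by
  have h1 : ∫⁻ x, ENNReal.ofReal (f x) ∂μ ≠ ⊤ := hf.lintegral_lt_top.ne
  have h2 : ∫⁻ x, ENNReal.ofReal (-f x) ∂μ ≠ ⊤ := hf.neg.lintegral_lt_top.ne
  rw [integral_eq_lintegral_pos_part_sub_lintegral_neg_part hf, eInt]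
  rw [EReal.coe_sub, EReal.coe_ennreal_toReal h1, EReal.coe_ennreal_toReal h2]

lemma s8_alg (t s : ℝ≥0) (ht : 0 < t) (hs : 0 < s) (P1 P2 N1 N2 : ℝ≥0∞)
    (h : (P1 ≠ ⊤ ∧ P2 ≠ ⊤) ∨ (N1 ≠ ⊤ ∧ N2 ≠ ⊤)) :
    ((t : ℝ) : EReal) * (-((P1 : EReal) - N1)) + ((s : ℝ) : EReal) * (-((P2 : EReal) - N2))
      ≤ -((((t : ℝ≥0∞) * P1 + s * P2 : ℝ≥0∞) : EReal) - (((t : ℝ≥0∞) * N1 + s * N2 : ℝ≥0∞) : EReal)) := by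
  have ht' : (0 : ℝ) < t := ht
  have hs' : (0 : ℝ) < s := hs
  have e : ∀ r : ℝ≥0, ((r : ℝ≥0∞) : EReal) = ((r : ℝ) : EReal) := fun r => rfl
  rcases h with ⟨h1, h2⟩ | ⟨h1, h2⟩
  · lift P1 to ℝ≥0 using h1
    lift P2 to ℝ≥0 using h2
    by_cases hN : (t : ℝ≥0∞) * N1 + s * N2 = ⊤
    · rw [hN, ← ENNReal.coe_mul, ← ENNReal.coe_mul, ← ENNReal.coe_add, e]
      simp
    · have hN1 : N1 ≠ ⊤ := by
        rintro rfl; apply hN; simp [ht.ne']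
      have hN2 : N2 ≠ ⊤ := by
        rintro rfl; apply hN; simp [hs.ne']
      lift N1 to ℝ≥0 using hN1
      lift N2 to ℝ≥0 using hN2
      simp only [← ENNReal.coe_mul, ← ENNReal.coe_add, e]
      norm_cast
      push_cast
      apply le_of_eq; ring
  · lift N1 to ℝ≥0 using h1
    lift N2 to ℝ≥0 using h2
    by_cases hP1 : P1 = ⊤
    · subst hP1
      have : ((⊤ : ℝ≥0∞) : EReal) - ((N1 : ℝ≥0∞) : EReal) = ⊤ := by
        rw [e]; simp
      rw [this, EReal.neg_top, EReal.coe_mul_bot_of_pos ht', EReal.bot_add]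
      exact bot_le
    by_cases hP2 : P2 = ⊤
    · subst hP2
      have : ((⊤ : ℝ≥0∞) : EReal) - ((N2 : ℝ≥0∞) : EReal) = ⊤ := by
        rw [e]; simp
      rw [this, EReal.neg_top, EReal.coe_mul_bot_of_pos hs', EReal.add_bot]
      exact bot_le
    lift P1 to ℝ≥0 using hP1
    lift P2 to ℝ≥0 using hP2
    simp only [← ENNReal.coe_mul, ← ENNReal.coe_add, e]
    norm_cast
    push_cast
    apply le_of_eq; ring

lemma s8_Hker_le {X Y : Type*} [MeasurableSpace X] [MeasurableSpace Y]
    (κ : Kernel Y X) (π : Measure (X × Y)) (c : X × Y → ℝ) (hc : Measurable c)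
    (hn : ∀ y, (∫ x, Real.exp (c (x, y)) ∂(κ y)) = 1) (hw : IntWellDef π c) :
    Hker κ π ≤ - eInt π c := by
  rw [Hker, EReal.neg_le_neg_iff]
  exact le_sSup ⟨c, hc, hn, hw, rfl⟩

lemma s8_le_Hker {X Y : Type*} [MeasurableSpace X] [MeasurableSpace Y]
    (κ : Kernel Y X) (π : Measure (X × Y)) (b : EReal)
    (h : ∀ c : X × Y → ℝ, Measurable c → 
      (∀ y, (∫ x, Real.exp (c (x, y)) ∂(κ y)) = 1) → IntWellDef π c → b ≤ - eInt π c) :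
    b ≤ Hker κ π := by
  rw [Hker, EReal.le_neg]
  apply sSup_le
  rintro r ⟨c, hc, hn, hw, rfl⟩
  exact EReal.le_neg.1 (h c hc hn hw)

lemma s8_concave {X Y : Type*} [MeasurableSpace X] [MeasurableSpace Y]
    (κ : Kernel Y X) (pi₁ pi₂ : Measure (X × Y)) (t s : ℝ≥0) (ht : 0 < t) (hs : 0 < s) :
    ((t : ℝ) : EReal) * Hker κ pi₁ + ((s : ℝ) : EReal) * Hker κ pi₂
          ≤ Hker κ (t • pi₁ + s • pi₂) := by
  apply s8_le_Hker
  intro c hc hn hw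
  have key : ∀ f : X × Y → ℝ≥0∞, ∫⁻ x, f x ∂(t • pi₁ + s • pi₂)
      = t * ∫⁻ x, f x ∂pi₁ + s * ∫⁻ x, f x ∂pi₂ := by
    intro f
    rw [lintegral_add_measure, lintegral_smul_measure, lintegral_smul_measure]
    rfl
  have fin : ∀ a b : ℝ≥0∞, (t : ℝ≥0∞) * a + s * b ≠ ⊤ → a ≠ ⊤ ∧ b ≠ ⊤ := by
    intro a b h
    constructor
    · rintro rfl; apply h; simp [ht.ne']
    · rintro rfl; apply h; simp [hs.ne']
  unfold IntWellDef at hw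
  rw [key, key] at hw
  have hfin := hw.imp (fin _ _) (fin _ _)
  have w1 : IntWellDef pi₁ c := hfin.imp And.left And.left
  have w2 : IntWellDef pi₂ c := hfin.imp And.right And.right
  refine le_trans (add_le_add
    (mul_le_mul_of_nonneg_left (s8_Hker_le κ pi₁ c hc hn w1) (by exact_mod_cast t.2))
    (mul_le_mul_of_nonneg_left (s8_Hker_le κ pi₂ c hc hn w2) (by exact_mod_cast s.2))) ?_
  unfold eInt
  rw [key, key]
  exact s8_alg t s ht hs _ _ _ _ hfin

lemma s8_approx {X Y : Type*} [MeasurableSpace X] [MeasurableSpace Y]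
    (κ : Kernel Y X) [IsMarkovKernel κ] (π : Measure (X × Y)) [IsProbabilityMeasure π]
    (c : X × Y → ℝ) (hc : Measurable c)
    (hn : ∀ y, (∫ x, Real.exp (c (x, y)) ∂(κ y)) = 1) (a : ℝ) (ha : (a : EReal) < eInt π c) :
    ∃ c' : X × Y → ℝ, Measurable c' ∧ (∀ y, (∫ x, Real.exp (c' (x, y)) ∂(κ y)) = 1) ∧
      (∃ C, ∀ p, |c' p| ≤ C) ∧ a < ∫ p, c' p ∂π := by
  set P := ∫⁻ x, ENNReal.ofReal (c x) ∂π with hP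
  set N := ∫⁻ x, ENNReal.ofReal (-c x) ∂π with hN
  have ha0 : (a : EReal) < (P : EReal) - N := ha
  have hNt : N ≠ ⊤ := by
    intro h; rw [h] at ha0; simp at ha0
  obtain ⟨b, hab, hb⟩ := EReal.lt_iff_exists_real_btwn.1 ha0
  have hab' : a < b := by exact_mod_cast hab
  -- truncation
  let T : ℕ → X × Y → ℝ := fun k p => max (min (c p) k) (-k)
  have hTm : ∀ k, Measurable (T k) := fun k => (hc.min measurable_const).max measurable_const
  have hTle : ∀ (k : ℕ) p, T k p ≤ k := fun k p => by
    apply max_le (min_le_right _ _)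
    have : (0:ℝ) ≤ k := k.cast_nonneg
    linarith
  have hTge : ∀ (k : ℕ) p, -(k:ℝ) ≤ T k p := fun k p => le_max_right _ _
  have hTabs : ∀ (k : ℕ) p, |T k p| ≤ k := fun k p => abs_le.2 ⟨hTge k p, hTle k p⟩
  have hTint : ∀ k, Integrable (T k) π := fun k =>
    Integrable.of_bound (hTm k).aestronglyMeasurable k (Filter.Eventually.of_forall (hTabs k))
  -- convergence of positive parts
  have hPk : Filter.Tendsto (fun k => ∫⁻ p, ENNReal.ofReal (T k p) ∂π) Filter.atTop (nhds P) := by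
    apply lintegral_tendsto_of_tendsto_of_monotone
    · exact fun k => (hTm k).ennreal_ofReal.aemeasurable
    · refine Filter.Eventually.of_forall fun p => ?_
      intro k l hkl
      have hkl' : (k:ℝ) ≤ l := by exact_mod_cast hkl
      have h0 : (0:ℝ) ≤ k := k.cast_nonneg
      rcases le_total 0 (c p) with h | h
      · apply ENNReal.ofReal_le_ofReal
        have : ∀ j : ℕ, T j p = min (c p) j := fun j =>
          max_eq_left (le_trans (neg_nonpos.2 j.cast_nonneg) (le_min h j.cast_nonneg))
        rw [this, this]
        exact min_le_min_left _ hkl'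
      · have : T k p ≤ 0 := max_le ((min_le_left _ _).trans h) (by linarith)
        simp only [ENNReal.ofReal_of_nonpos this, zero_le]
    · refine Filter.Eventually.of_forall fun p => ?_
      apply tendsto_const_nhds.congr'
      obtain ⟨K, hK⟩ := exists_nat_ge |c p|
      filter_upwards [Filter.eventually_ge_atTop K] with k hk
      have hk' : (K:ℝ) ≤ k := by exact_mod_cast hk
      have := abs_le.1 (hK.trans hk')
      simp only [T]
      rw [min_eq_left this.2, max_eq_left this.1]
  have hNk : ∀ k, ∫⁻ p, ENNReal.ofReal (-T k p) ∂π ≤ N := by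
    intro k
    apply lintegral_mono
    intro p
    rcases le_total 0 (c p) with h | h
    · have : 0 ≤ T k p := le_max_of_le_left (le_min h k.cast_nonneg)
      simp [ENNReal.ofReal_of_nonpos (neg_nonpos.2 this)]
    · apply ENNReal.ofReal_le_ofReal
      have : c p ≤ T k p := le_max_of_le_left (le_min le_rfl (h.trans k.cast_nonneg))
      linarith
  have hbP : ∀ᶠ k in Filter.atTop, b ≤ ∫ p, T k p ∂π := by
    have h1 : ENNReal.ofReal (b + N.toReal) < P ∨ b + N.toReal < 0 ∨ (b + N.toReal ≤ 0) := by
      rcases le_or_gt (b + N.toReal) 0 with h | h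
      · exact Or.inr (Or.inr h)
      · left
        by_cases hPt : P = ⊤
        · rw [hPt]; exact ENNReal.ofReal_lt_top
        · rw [ENNReal.ofReal_lt_iff_lt_toReal h.le hPt]
          rw [← EReal.coe_ennreal_toReal hPt, ← EReal.coe_ennreal_toReal hNt] at hb
          have : b < P.toReal - N.toReal := by exact_mod_cast hb
          linarith
    have h2 : ∀ k, ∫ p, T k p ∂π = (∫⁻ p, ENNReal.ofReal (T k p) ∂π).toReal
        - (∫⁻ p, ENNReal.ofReal (-T k p) ∂π).toReal := fun k =>
      integral_eq_lintegral_pos_part_sub_lintegral_neg_part (hTint k)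
    have h3 : ∀ k, (∫⁻ p, ENNReal.ofReal (-T k p) ∂π).toReal ≤ N.toReal := fun k =>
      ENNReal.toReal_mono hNt (hNk k)
    rcases h1 with h | h
    · filter_upwards [hPk.eventually (lt_mem_nhds h)] with k hk
      have := (ENNReal.ofReal_le_iff_le_toReal (hTint k).lintegral_lt_top.ne).1 hk.le
      rw [h2]
      linarith [h3 k]
    · have h : b + N.toReal ≤ 0 := h.elim le_of_lt id
      refine Filter.Eventually.of_forall fun k => ?_
      rw [h2]
      have : 0 ≤ (∫⁻ p, ENNReal.ofReal (T k p) ∂π).toReal := ENNReal.toReal_nonneg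
      linarith [h3 k]
  have hexp : ∀ᶠ k : ℕ in Filter.atTop, Real.exp (-(k:ℝ)) < b - a := by
    have : Filter.Tendsto (fun k : ℕ => Real.exp (-(k:ℝ))) Filter.atTop (nhds 0) :=
      Real.tendsto_exp_neg_atTop_nhds_zero.comp tendsto_natCast_atTop_atTop
    exact this.eventually (gt_mem_nhds (by linarith))
  obtain ⟨k, hk1, hk2⟩ := (hbP.and hexp).exists
  let Z : Y → ℝ := fun y => ∫ x, Real.exp (T k (x, y)) ∂(κ y)
  have hZm : Measurable Z := by
    have : StronglyMeasurable (fun p : X × Y => Real.exp (T k p)) :=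
      (Real.measurable_exp.comp (hTm k)).stronglyMeasurable
    exact (this.integral_kernel_prod_left' (κ := κ)).measurable
  have hEint : ∀ y, Integrable (fun x => Real.exp (T k (x, y))) (κ y) := by
    intro y
    refine Integrable.of_bound (C := Real.exp k) ?_ ?_
    · exact (Real.measurable_exp.comp ((hTm k).comp measurable_prodMk_right)).aestronglyMeasurable
    · refine Filter.Eventually.of_forall fun x => ?_
      rw [Real.norm_eq_abs, abs_of_pos (Real.exp_pos _)]
      exact Real.exp_le_exp.2 (hTle k _)
  have hZge : ∀ y, Real.exp (-(k:ℝ)) ≤ Z y := by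
    intro y
    have := integral_mono (μ := κ y) (integrable_const (Real.exp (-(k:ℝ)))) (hEint y)
      (fun x => Real.exp_le_exp.2 (hTge k (x, y)))
    simpa using this
  have hZpos : ∀ y, 0 < Z y := fun y => (Real.exp_pos _).trans_le (hZge y)
  have hZle' : ∀ y, Z y ≤ Real.exp k := by
    intro y
    have := integral_mono (μ := κ y) (hEint y) (integrable_const (Real.exp (k:ℝ)))
      (fun x => Real.exp_le_exp.2 (hTle k (x, y)))
    simpa using this
  have hZle : ∀ y, Z y ≤ 1 + Real.exp (-(k:ℝ)) := by
    intro y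
    have hci : Integrable (fun x => Real.exp (c (x, y))) (κ y) := by
      by_contra h
      have := hn y
      rw [integral_undef h] at this
      exact zero_ne_one this
    have := integral_mono (μ := κ y) (hEint y)
      (hci.add (integrable_const (Real.exp (-(k:ℝ))))) (fun x => by
        change Real.exp (max (min (c (x, y)) k) (-k)) ≤ Real.exp (c (x, y)) + Real.exp (-(k:ℝ))
        rcases max_choice (min (c (x, y)) (k:ℝ)) (-k) with h | h
        · rw [h]
          have := Real.exp_le_exp.2 (min_le_left (c (x, y)) (k:ℝ))
          linarith [Real.exp_pos (-(k:ℝ))]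
        · rw [h]
          linarith [Real.exp_pos (c (x, y))])
    rw [integral_add' hci (integrable_const _), hn y] at this
    simpa using this
  have hlogle : ∀ y, Real.log (Z y) ≤ Real.exp (-(k:ℝ)) := by
    intro y
    have := Real.log_le_sub_one_of_pos (hZpos y)
    linarith [hZle y]
  have hlogabs : ∀ y, |Real.log (Z y)| ≤ k := by
    intro y
    rw [abs_le]
    exact ⟨(Real.le_log_iff_exp_le (hZpos y)).2 (hZge y),
      (Real.log_le_iff_le_exp (hZpos y)).2 (hZle' y)⟩
  have hlm : Measurable (fun p : X × Y => Real.log (Z p.2)) :=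
    Real.measurable_log.comp (hZm.comp measurable_snd)
  have hli : Integrable (fun p : X × Y => Real.log (Z p.2)) π :=
    Integrable.of_bound hlm.aestronglyMeasurable k
      (Filter.Eventually.of_forall fun p => hlogabs p.2)
  refine ⟨fun p => T k p - Real.log (Z p.2), (hTm k).sub hlm, ?_, ⟨k + k, ?_⟩, ?_⟩
  · intro y
    simp only [Real.exp_sub, Real.exp_log (hZpos y)]
    rw [integral_div]
    exact div_self (hZpos y).ne'
  · intro p
    exact (abs_sub _ _).trans (add_le_add (hTabs k p) (hlogabs p.2))
  · rw [integral_sub (hTint k) hli]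
    have := integral_mono (μ := π) hli (integrable_const (Real.exp (-(k:ℝ))))
      (fun p => hlogle p.2)
    simp only [integral_const, probReal_univ, smul_eq_mul, one_mul] at this
    linarith

/-- (1) `H^{ν̂}` is concave on probability measures, and (2) `H^{ν̂}` is upper
semicontinuous: if `∫ f dπₙ → ∫ f dπ` for every bounded measurable `f`, then
`limsupₙ H^{ν̂}(πₙ) ≤ H^{ν̂}(π)`. -/
theorem statement8 {X Y : Type*} [MeasurableSpace X] [MeasurableSpace Y]
    (κ : Kernel Y X) [IsMarkovKernel κ] :
    (∀ (pi₁ pi₂ : Measure (X × Y)), IsProbabilityMeasure pi₁ → IsProbabilityMeasure pi₂ →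
      ∀ t : ℝ≥0, t ≤ 1 →
        ((t : ℝ) : EReal) * Hker κ pi₁ + (((1 - t : ℝ≥0) : ℝ) : EReal) * Hker κ pi₂
          ≤ Hker κ (t • pi₁ + (1 - t) • pi₂))
    ∧ (∀ (pi : ℕ → Measure (X × Y)) (piLim : Measure (X × Y)),
        (∀ n, IsProbabilityMeasure (pi n)) → IsProbabilityMeasure piLim →
        (∀ f : X × Y → ℝ, Measurable f → (∃ C, ∀ p, |f p| ≤ C) →
          Filter.Tendsto (fun n => ∫ p, f p ∂(pi n)) Filter.atTop
            (nhds (∫ p, f p ∂piLim))) →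
        Filter.limsup (fun n => Hker κ (pi n)) Filter.atTop ≤ Hker κ piLim) := by
  constructor
  · intro pi₁ pi₂ _ _ t ht
    rcases eq_or_lt_of_le (zero_le (a := t)) with h0 | h0
    · subst h0
      simp
    rcases eq_or_lt_of_le ht with h1 | h1
    · subst h1
      simp
    exact s8_concave κ pi₁ pi₂ t (1 - t) h0 (tsub_pos_of_lt h1)
  · intro pi piLim hpi hlim hconv
    apply s8_le_Hker
    intro c hc hn _
    refine le_of_forall_gt_imp_ge_of_dense fun b hb => ?_
    have hb' : -b < eInt piLim c := EReal.neg_lt_comm.1 hb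
    obtain ⟨a, hba, ha⟩ := EReal.lt_iff_exists_real_btwn.1 hb'
    obtain ⟨c', hc', hn', hbd, hac⟩ := s8_approx κ piLim c hc hn a ha
    have hev := (hconv c' hc' hbd).eventually (lt_mem_nhds hac)
    refine Filter.limsup_le_of_le (by isBoundedDefault) ?_
    filter_upwards [hev] with n hn1
    obtain ⟨C, hC⟩ := hbd
    have hcInt : Integrable c' (pi n) := Integrable.of_bound hc'.aestronglyMeasurable C
      (Filter.Eventually.of_forall hC)
    refine (s8_Hker_le κ (pi n) c' hc' hn' (Or.inl hcInt.lintegral_lt_top.ne)).trans ?_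
    rw [s8_eInt_of_integrable _ _ hcInt]
    rw [EReal.neg_le]
    refine hba.le.trans ?_
    exact_mod_cast hn1.le

end
end

section
/- Let X and Y be measurable spaces, ν̂ a probability kernel from Y to X, and π a probability measure on X × Y. Let φ₀ : X × Y → ℝ be a bounded measurable ν̂-normalized function and define the probability kernel μ̂ by μ̂^y(dx) = e^{φ₀(x,y)} ν̂^y(dx). Then IG(π, μ̂) = −∫ φ₀ dπ + IG(π, ν̂); equivalently, H^{μ̂}(π) = ∫ φ₀ dπ + H^{ν̂}(π). -/
open MeasureTheory ENNReal ProbabilityTheory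

noncomputable section
open scoped Classical

lemma aux_arith_s10 (P N P' N' p n : ℝ≥0∞) (hp : p ≠ ⊤) (hn : n ≠ ⊤)
    (h : P' + N + n = N' + P + p) (h1 : P' ≤ P + p) (h2 : N' ≤ N + n)
    (hw : P ≠ ⊤ ∨ N ≠ ⊤) :
    (P' ≠ ⊤ ∨ N' ≠ ⊤) ∧
    (P' : EReal) - (N' : EReal) = ((P : EReal) - (N : EReal)) + ((p.toReal - n.toReal : ℝ) : EReal) := by
  have hco : ∀ q : NNReal, ((q : ℝ≥0∞) : EReal) = ((q : ℝ) : EReal) := fun q => rfl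
  by_cases hP : P = ⊤
  · have hN : N ≠ ⊤ := by tauto
    have hN' : N' ≠ ⊤ := ne_top_of_le_ne_top (by simp [hN, hn]) h2
    have hP' : P' = ⊤ := by
      by_contra hc
      have : P' + N + n ≠ ⊤ := by simp [hc, hN, hn]
      rw [h, hP] at this
      simp at this
    refine ⟨Or.inr hN', ?_⟩
    lift N to NNReal using hN
    lift N' to NNReal using hN'
    subst hP hP'
    rw [EReal.coe_ennreal_top, hco, hco, EReal.top_sub_coe, EReal.top_sub_coe, EReal.top_add_coe]
  · have hP' : P' ≠ ⊤ := ne_top_of_le_ne_top (by simp [hP, hp]) h1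
    refine ⟨Or.inl hP', ?_⟩
    by_cases hN : N = ⊤
    · have hN' : N' = ⊤ := by
        by_contra hc
        have : N' + P + p ≠ ⊤ := by simp [hc, hP, hp]
        rw [← h, hN] at this
        simp at this
      subst hN hN'
      rw [EReal.coe_ennreal_top, sub_eq_add_neg, sub_eq_add_neg, EReal.neg_top, EReal.add_bot, EReal.add_bot, EReal.bot_add]
    · have hN' : N' ≠ ⊤ := ne_top_of_le_ne_top (by simp [hN, hn]) h2
      lift N to NNReal using hN
      lift N' to NNReal using hN'
      lift P to NNReal using hP
      lift P' to NNReal using hP'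
      lift p to NNReal using hp
      lift n to NNReal using hn
      have h' : (P' : ℝ) + N + n = N' + P + p := by exact_mod_cast h
      simp only [hco, ENNReal.coe_toReal]
      rw [← EReal.coe_sub, ← EReal.coe_sub, ← EReal.coe_add, EReal.coe_eq_coe_iff]
      linarith

lemma aux_int {α : Type*} [MeasurableSpace α] (μ : Measure α) (c φ : α → ℝ)
    (hc : Measurable c) (hφ : Measurable φ) (hi : Integrable φ μ) (hw : IntWellDef μ c) :
    IntWellDef μ (fun x => c x + φ x) ∧
      eInt μ (fun x => c x + φ x) = eInt μ c + ((∫ x, φ x ∂μ : ℝ) : EReal) := by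
  have hp : ∫⁻ x, ENNReal.ofReal (φ x) ∂μ ≠ ⊤ := hi.lintegral_lt_top.ne
  have hn : ∫⁻ x, ENNReal.ofReal (-φ x) ∂μ ≠ ⊤ := hi.neg.lintegral_lt_top.ne
  rw [integral_eq_lintegral_pos_part_sub_lintegral_neg_part hi]
  refine aux_arith_s10 _ _ _ _ _ _ hp hn ?_ ?_ ?_ hw
  · rw [← lintegral_add_left (by fun_prop), ← lintegral_add_left (by fun_prop),
      ← lintegral_add_left (by fun_prop), ← lintegral_add_left (by fun_prop)]
    refine lintegral_congr fun x => ?_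
    simp only [ENNReal.ofReal]
    norm_cast
    apply NNReal.coe_injective
    push_cast [Real.coe_toNNReal']
    have e : ∀ a : ℝ, max a 0 = max (-a) 0 + a := fun a => by
      rcases le_total a 0 with h | h
      · rw [max_eq_right h, max_eq_left (by linarith)]; ring
      · rw [max_eq_left h, max_eq_right (by linarith)]; ring
    rw [e (c x + φ x), e (c x), e (φ x)]
    ring
  · rw [← lintegral_add_left (by fun_prop)]
    exact lintegral_mono fun x => ENNReal.ofReal_add_le
  · rw [← lintegral_add_left (by fun_prop)]
    refine lintegral_mono fun x => ?_
    rw [neg_add]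
    exact ENNReal.ofReal_add_le

lemma aux_kernel {X Y : Type*} [MeasurableSpace X] [MeasurableSpace Y]
    (κ : Kernel Y X) [IsMarkovKernel κ] (φ₀ : X × Y → ℝ) (hm : Measurable φ₀)
    (c : X × Y → ℝ) (y : Y) :
    ∫ x, Real.exp (c (x, y)) ∂(κ.withDensity (fun y x => ENNReal.ofReal (Real.exp (φ₀ (x, y)))) y)
      = ∫ x, Real.exp (c (x, y) + φ₀ (x, y)) ∂(κ y) := by
  rw [Kernel.withDensity_apply _ (by
    unfold Function.uncurry; fun_prop)]
  rw [integral_withDensity_eq_integral_toReal_smul (by fun_prop) (by simp)]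
  refine integral_congr_ae (Filter.Eventually.of_forall fun x => ?_)
  simp only [smul_eq_mul]
  rw [ENNReal.toReal_ofReal (Real.exp_pos _).le, add_comm, Real.exp_add]

/-- for a bounded measurable `ν̂`-normalized `φ₀` and the kernel
`μ̂^y(dx) = e^{φ₀(x,y)} ν̂^y(dx)`, one has `IG(π, μ̂) = −∫ φ₀ dπ + IG(π, ν̂)`;
equivalently `H^{μ̂}(π) = ∫ φ₀ dπ + H^{ν̂}(π)`. -/
theorem statement10 {X Y : Type*} [MeasurableSpace X] [MeasurableSpace Y]
    (κ : Kernel Y X) [IsMarkovKernel κ]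
    (pi : Measure (X × Y)) [IsProbabilityMeasure pi]
    (φ₀ : X × Y → ℝ) (hm : Measurable φ₀) (hb : ∃ C, ∀ p, |φ₀ p| ≤ C)
    (hnorm : ∀ y, (∫ x, Real.exp (φ₀ (x, y)) ∂(κ y)) = 1) :
    - Hker (κ.withDensity (fun y x => ENNReal.ofReal (Real.exp (φ₀ (x, y))))) pi
      = - ((∫ p, φ₀ p ∂pi : ℝ) : EReal) + (- Hker κ pi)
    ∧ Hker (κ.withDensity (fun y x => ENNReal.ofReal (Real.exp (φ₀ (x, y))))) pi
      = ((∫ p, φ₀ p ∂pi : ℝ) : EReal) + Hker κ pi := by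
  obtain ⟨C, hC⟩ := hb
  have hi : Integrable φ₀ pi :=
    Integrable.of_bound hm.aestronglyMeasurable C (Filter.Eventually.of_forall hC)
  have key : - Hker (κ.withDensity (fun y x => ENNReal.ofReal (Real.exp (φ₀ (x, y))))) pi
      = - ((∫ p, φ₀ p ∂pi : ℝ) : EReal) + (- Hker κ pi) := by
    unfold Hker
    rw [neg_neg, neg_neg]
    have hneg : ((∫ p, -φ₀ p ∂pi : ℝ) : EReal) = - ((∫ p, φ₀ p ∂pi : ℝ) : EReal) := by
      rw [integral_neg, EReal.coe_neg]
    have hcancel : ∀ (a : ℝ) (z : EReal), -(a : EReal) + (z + a) = z := by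
      intro a z
      induction z with
      | bot => simp
      | top => rw [EReal.top_add_coe, ← EReal.coe_neg, EReal.coe_add_top]
      | coe z => norm_cast; ring_nf
    have hcancel2 : ∀ (a : ℝ) (z : EReal), (-(a : EReal) + z) + a = z := by
      intro a z
      rw [add_assoc, hcancel]
    apply le_antisymm
    · refine sSup_le ?_
      rintro r ⟨c, hc, hcn, hw, rfl⟩
      obtain ⟨hw', he⟩ := aux_int pi c φ₀ hc hm hi hw
      rw [← hcancel (∫ p, φ₀ p ∂pi) (eInt pi c), ← he]
      refine add_le_add le_rfl (le_sSup ⟨_, hc.add hm, fun y => ?_, hw', rfl⟩)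
      rw [← hcn y, aux_kernel κ φ₀ hm c y]
      rfl
    · rw [← hcancel (∫ p, φ₀ p ∂pi) (sSup {r : EReal | ∃ c : X × Y → ℝ, Measurable c ∧
        (∀ y, (∫ x, Real.exp (c (x, y)) ∂(κ.withDensity
          (fun y x => ENNReal.ofReal (Real.exp (φ₀ (x, y)))) y)) = 1) ∧
          IntWellDef pi c ∧ r = eInt pi c})]
      refine add_le_add le_rfl (sSup_le ?_)
      rintro r ⟨c, hc, hcn, hw, rfl⟩
      obtain ⟨hw', he⟩ := aux_int pi c (fun p => -φ₀ p) hc hm.neg hi.neg hw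
      rw [← hcancel2 (∫ p, φ₀ p ∂pi) (eInt pi c)]
      refine add_le_add (le_sSup ⟨_, hc.add hm.neg, fun y => ?_, hw', ?_⟩) le_rfl
      · rw [aux_kernel κ φ₀ hm, ← hcn y]
        simp
      · rw [add_comm, ← hneg]
        exact he.symm
  refine ⟨key, ?_⟩
  rw [← neg_inj, key, EReal.neg_add (Or.inl (EReal.coe_ne_bot _)) (Or.inl (EReal.coe_ne_top _)),
    sub_eq_add_neg]

end
end

section
/- Let X and Y be compact metric spaces equipped with their Borel σ-algebras, ν a Borel probability measure on X with supp(ν) = X, and π a Borel probability measure on X × Y. Then H^ν(π) = −sup{∫ f dπ : f : X × Y → ℝ Lipschitz with ∫ e^{f(x,y)} dν(x) = 1 for every y ∈ Y}; that is, in the definition of H^ν(π) the supremum over measurable ν-normalized functions may be replaced by the supremum over Lipschitz ν-normalized functions. -/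
open MeasureTheory ENNReal ProbabilityTheory

noncomputable section
open scoped Classical

open Filter Topology

namespace S11

lemma ENNReal_coe {a : ℝ≥0∞} (h : a ≠ ⊤) : ((a.toReal : ℝ) : EReal) = (a : EReal) := by
  lift a to NNReal using h
  rfl

lemma eInt_eq {α : Type*} [MeasurableSpace α] {μ : Measure α} {f : α → ℝ} (hf : Integrable f μ) :
    eInt μ f = ((∫ x, f x ∂μ : ℝ) : EReal) := by
  have h1 : (∫⁻ x, ENNReal.ofReal (f x) ∂μ) ≠ ⊤ := hf.lintegral_lt_top.ne
  have h2 : (∫⁻ x, ENNReal.ofReal (-f x) ∂μ) ≠ ⊤ := hf.neg.lintegral_lt_top.ne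
  rw [integral_eq_lintegral_pos_part_sub_lintegral_neg_part hf, EReal.coe_sub,
    ENNReal_coe h1, ENNReal_coe h2]
  rfl

section
variable {X Y : Type*} [MeasurableSpace X] [MeasurableSpace Y]

/-- log-normalizer -/
def L (ν : Measure X) (g : X × Y → ℝ) (y : Y) : ℝ :=
  Real.log (∫ x, Real.exp (g (x, y)) ∂ν)

lemma int_bdd {α : Type*} [MeasurableSpace α] {μ : Measure α} [IsFiniteMeasure μ] {f : α → ℝ}
    (hf : Measurable f) {M : ℝ} (hb : ∀ x, |f x| ≤ M) : Integrable f μ :=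
  Integrable.of_bound hf.aestronglyMeasurable M (Eventually.of_forall hb)

lemma int_exp (ν : Measure X) [IsProbabilityMeasure ν] {g : X × Y → ℝ} (hg : Measurable g) {M : ℝ}
    (hb : ∀ p, |g p| ≤ M) (y : Y) : Integrable (fun x => Real.exp (g (x, y))) ν := by
  refine int_bdd (M := Real.exp M) (by fun_prop) fun x => ?_
  rw [Real.abs_exp]
  exact Real.exp_le_exp.2 (abs_le.1 (hb _)).2

lemma exp_bounds (ν : Measure X) [IsProbabilityMeasure ν] {g : X × Y → ℝ} (hg : Measurable g)
    {M : ℝ} (hb : ∀ p, |g p| ≤ M) (y : Y) :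
    Real.exp (-M) ≤ ∫ x, Real.exp (g (x, y)) ∂ν ∧ ∫ x, Real.exp (g (x, y)) ∂ν ≤ Real.exp M := by
  constructor
  · have := integral_mono (integrable_const (μ := ν) (Real.exp (-M))) (int_exp ν hg hb y)
      fun x => Real.exp_le_exp.2 (abs_le.1 (hb (x, y))).1
    simpa using this
  · have := integral_mono (int_exp ν hg hb y) (integrable_const (μ := ν) (Real.exp M))
      fun x => Real.exp_le_exp.2 (abs_le.1 (hb (x, y))).2
    simpa using this

lemma L_bdd (ν : Measure X) [IsProbabilityMeasure ν] {g : X × Y → ℝ} (hg : Measurable g)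
    {M : ℝ} (hb : ∀ p, |g p| ≤ M) (y : Y) : |L ν g y| ≤ M := by
  obtain ⟨h1, h2⟩ := exp_bounds ν hg hb y
  have h0 := (Real.exp_pos (-M)).trans_le h1
  rw [abs_le]
  exact ⟨(Real.le_log_iff_exp_le h0).2 h1, (Real.log_le_iff_le_exp h0).2 h2⟩

lemma L_meas (ν : Measure X) [IsProbabilityMeasure ν] {g : X × Y → ℝ} (hg : Measurable g) :
    Measurable (L ν g) := by
  have : StronglyMeasurable (fun p : X × Y => Real.exp (g p)) :=
    (Real.measurable_exp.comp hg).stronglyMeasurable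
  exact Real.measurable_log.comp this.integral_prod_left'.measurable

/-- normalized function -/
def N (ν : Measure X) (g : X × Y → ℝ) (p : X × Y) : ℝ := g p - L ν g p.2

lemma N_meas (ν : Measure X) [IsProbabilityMeasure ν] {g : X × Y → ℝ} (hg : Measurable g) :
    Measurable (N ν g) := hg.sub ((L_meas ν hg).comp measurable_snd)

lemma N_bdd (ν : Measure X) [IsProbabilityMeasure ν] {g : X × Y → ℝ} (hg : Measurable g)
    {M : ℝ} (hb : ∀ p, |g p| ≤ M) (p : X × Y) : |N ν g p| ≤ M + M :=
  (abs_sub _ _).trans (add_le_add (hb p) (L_bdd ν hg hb _))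

lemma N_norm (ν : Measure X) [IsProbabilityMeasure ν] {g : X × Y → ℝ} (hg : Measurable g)
    {M : ℝ} (hb : ∀ p, |g p| ≤ M) (y : Y) : ∫ x, Real.exp (N ν g (x, y)) ∂ν = 1 := by
  have h0 := (Real.exp_pos (-M)).trans_le (exp_bounds ν hg hb y).1
  simp only [N, L, Real.exp_sub, Real.exp_log h0, integral_div]
  exact div_self (ne_of_gt h0)

/-- convergence lemma -/
lemma conv (ν : Measure X) [IsProbabilityMeasure ν] (π : Measure (X × Y)) [IsProbabilityMeasure π]
    {g : X × Y → ℝ} (hg : Measurable g) {G : ℕ → X × Y → ℝ} (hG : ∀ n, Measurable (G n)) {M : ℝ}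
    (hb : ∀ p, |g p| ≤ M)
    (hB : ∀ n p, |G n p| ≤ M)
    (ht : ∀ᵐ p ∂(π + ν.prod π.snd), Tendsto (fun n => G n p) atTop (𝓝 (g p)))
    {r : ℝ} (hr : ∀ n, ∫ p, N ν (G n) p ∂π ≤ r) : ∫ p, N ν g p ∂π ≤ r := by
  rw [ae_add_measure_iff] at ht
  obtain ⟨ht1, ht2⟩ := ht
  rw [← Measure.prod_swap] at ht2
  have ht3 := Measure.ae_ae_of_ae_prod (ae_of_ae_map measurable_swap.aemeasurable ht2)
  have ht4 : ∀ᵐ p ∂π, ∀ᵐ x ∂ν, Tendsto (fun n => G n (x, p.2)) atTop (𝓝 (g (x, p.2))) :=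
    ae_of_ae_map measurable_snd.aemeasurable ht3
  refine le_of_tendsto' (tendsto_integral_of_dominated_convergence (fun _ => M + M)
    (fun n => (N_meas ν (hG n)).aestronglyMeasurable) (integrable_const _)
    (fun n => Eventually.of_forall (N_bdd ν (hG n) (hB n))) ?_) hr
  filter_upwards [ht1, ht4] with p hp1 hp2
  refine hp1.sub (Tendsto.log ?_ ?_)
  · refine tendsto_integral_of_dominated_convergence (fun _ => Real.exp M)
      (fun n => (int_exp ν (hG n) (hB n) p.2).aestronglyMeasurable) (integrable_const _)
      (fun n => Eventually.of_forall fun x => ?_) ?_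
    · rw [Real.norm_eq_abs, Real.abs_exp]
      exact Real.exp_le_exp.2 (abs_le.1 (hB _ _)).2
    · filter_upwards [hp2] with x hx
      exact (Real.continuous_exp.tendsto _).comp hx
  · exact ((Real.exp_pos (-M)).trans_le (exp_bounds ν hg hb p.2).1).ne'

end

section metric

lemma clamp_abs {a M : ℝ} (hM : 0 ≤ M) : |max (min a M) (-M)| ≤ M := by
  rw [abs_le]
  exact ⟨le_max_right _ _, max_le (min_le_right _ _) (by linarith)⟩

lemma clamp_dist {a b M : ℝ} (hb : |b| ≤ M) : |max (min a M) (-M) - b| ≤ |a - b| := by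
  obtain ⟨h1, h2⟩ := abs_le.1 hb
  have := le_abs_self (a - b)
  have := neg_abs_le (a - b)
  have := abs_nonneg (a - b)
  rw [abs_le]
  constructor
  · have : min a M - b ≥ -|a - b| := by
      rcases min_choice a M with h | h <;> rw [h] <;> linarith
    linarith [le_max_left (min a M) (-M)]
  · have : max (min a M) (-M) ≤ b + |a - b| :=
      max_le ((min_le_left _ _).trans (by linarith)) (by linarith)
    linarith

/-- Lipschitz regularization -/
def reg {Z : Type*} [PseudoMetricSpace Z] (g : Z → ℝ) (n : ℕ) (p : Z) : ℝ :=
  ⨅ q, (g q + n * dist p q)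

variable {Z : Type*} [PseudoMetricSpace Z]

lemma reg_bdd {g : Z → ℝ} {M : ℝ} (hb : ∀ p, |g p| ≤ M) (n : ℕ) (p : Z) :
    BddBelow (Set.range fun q => g q + n * dist p q) := by
  refine ⟨-M, ?_⟩
  rintro _ ⟨q, rfl⟩
  have := (abs_le.1 (hb q)).1
  have : (0:ℝ) ≤ n * dist p q := by positivity
  dsimp only
  linarith

lemma reg_le {g : Z → ℝ} {M : ℝ} (hb : ∀ p, |g p| ≤ M) (n : ℕ) (p : Z) : reg g n p ≤ g p := by
  have := ciInf_le (reg_bdd hb n p) p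
  simpa [reg] using this

lemma reg_abs {g : Z → ℝ} {M : ℝ} (hb : ∀ p, |g p| ≤ M) (n : ℕ) (p : Z) : |reg g n p| ≤ M := by
  have : Nonempty Z := ⟨p⟩
  rw [abs_le]
  refine ⟨le_ciInf fun q => ?_, (reg_le hb n p).trans (abs_le.1 (hb p)).2⟩
  have := (abs_le.1 (hb q)).1
  have : (0:ℝ) ≤ n * dist p q := by positivity
  linarith

lemma reg_lip {g : Z → ℝ} {M : ℝ} (hb : ∀ p, |g p| ≤ M) (n : ℕ) :
    LipschitzWith n (reg g n) := by
  refine LipschitzWith.of_le_add_mul _ fun p p' => ?_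
  have : Nonempty Z := ⟨p⟩
  rw [← sub_le_iff_le_add]
  refine le_ciInf fun q => ?_
  have h1 : reg g n p ≤ g q + n * dist p q := ciInf_le (reg_bdd hb n p) q
  have h2 : (n:ℝ) * dist p q ≤ n * (dist p p' + dist p' q) := by
    gcongr
    exact dist_triangle _ _ _
  push_cast
  linarith

lemma reg_tendsto {g : Z → ℝ} {M : ℝ} (hb : ∀ p, |g p| ≤ M) (hc : Continuous g) (p : Z) :
    Tendsto (fun n => reg g n p) atTop (𝓝 (g p)) := by
  have : Nonempty Z := ⟨p⟩
  rw [Metric.tendsto_atTop]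
  intro ε hε
  obtain ⟨δ, hδ, h⟩ := Metric.continuous_iff.1 hc p (ε / 2) (half_pos hε)
  obtain ⟨n0, hn0⟩ := exists_nat_ge (2 * M / δ)
  refine ⟨n0, fun n hn => ?_⟩
  have h1 := reg_le hb n p
  have h2 : g p - ε / 2 ≤ reg g n p := by
    refine le_ciInf fun q => ?_
    rcases lt_or_ge (dist q p) δ with hd | hd
    · have h3 := abs_lt.1 (h q hd)
      have : (0:ℝ) ≤ n * dist p q := by positivity
      linarith [h3.1]
    · have h4 : 2 * M ≤ n * δ := by
        rw [div_le_iff₀ hδ] at hn0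
        refine hn0.trans ?_
        gcongr
      have h5 : (n:ℝ) * δ ≤ n * dist p q := by
        rw [dist_comm p q]
        gcongr
      linarith [(abs_le.1 (hb p)).2, (abs_le.1 (hb q)).1]
  rw [Real.dist_eq, abs_lt]
  constructor <;> linarith

end metric

section main
variable {X Y : Type*}
    [MetricSpace X] [CompactSpace X] [MeasurableSpace X] [BorelSpace X]
    [MetricSpace Y] [CompactSpace Y] [MeasurableSpace Y] [BorelSpace Y]
    (ν : Measure X) [IsProbabilityMeasure ν]
    (pi : Measure (X × Y)) [IsProbabilityMeasure pi]

lemma N_lip {g : X × Y → ℝ} (hg : Measurable g) {M : ℝ}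
    (hb : ∀ p, |g p| ≤ M) {K : NNReal} (hK : LipschitzWith K g) :
    ∃ K', LipschitzWith K' (N ν g) := by
  have hL : LipschitzWith K (L ν g) := by
    refine LipschitzWith.of_le_add_mul _ fun y y' => ?_
    have h0 := (Real.exp_pos (-M)).trans_le (exp_bounds ν hg hb y).1
    have h0' := (Real.exp_pos (-M)).trans_le (exp_bounds ν hg hb y').1
    have : ∫ x, Real.exp (g (x, y)) ∂ν ≤
        (∫ x, Real.exp (g (x, y')) ∂ν) * Real.exp (K * dist y y') := by
      rw [← integral_mul_const]
      refine integral_mono (int_exp ν hg hb y) ((int_exp ν hg hb y').mul_const _) fun x => ?_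
      dsimp only
      rw [← Real.exp_add]
      refine Real.exp_le_exp.2 ?_
      have := hK.le_add_mul (x, y) (x, y')
      simpa [Prod.dist_eq] using this
    calc L ν g y ≤ Real.log ((∫ x, Real.exp (g (x, y')) ∂ν) * Real.exp (K * dist y y')) :=
          Real.log_le_log h0 this
      _ = _ := by rw [Real.log_mul h0'.ne' (Real.exp_pos _).ne', Real.log_exp]; rfl
  exact ⟨_, hK.sub (hL.comp LipschitzWith.prod_snd)⟩

lemma cont_le {r : ℝ} (hr : ∀ f : X × Y → ℝ, (∃ K, LipschitzWith K f) →
  (∀ y, (∫ x, Real.exp (f (x, y)) ∂ν) = 1) → ∫ p, f p ∂pi ≤ r)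
    {g : X × Y → ℝ} (hc : Continuous g) {M : ℝ} (hb : ∀ p, |g p| ≤ M) :
    ∫ p, N ν g p ∂pi ≤ r := by
  have hm : ∀ n, Measurable (reg g n) := fun n => (reg_lip hb n).continuous.measurable
  refine conv ν pi hc.measurable hm hb (reg_abs hb)
    (Eventually.of_forall (reg_tendsto hb hc)) fun n => ?_
  exact hr _ (N_lip ν (hm n) (reg_abs hb n) (reg_lip hb n)) (N_norm ν (hm n) (reg_abs hb n))

lemma meas_le {r : ℝ} (hr : ∀ f : X × Y → ℝ, (∃ K, LipschitzWith K f) →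
  (∀ y, (∫ x, Real.exp (f (x, y)) ∂ν) = 1) → ∫ p, f p ∂pi ≤ r)
    {g : X × Y → ℝ} (hg : Measurable g) {M : ℝ} (hM : 0 ≤ M) (hb : ∀ p, |g p| ≤ M) :
    ∫ p, N ν g p ∂pi ≤ r := by
  set μ := pi + ν.prod pi.snd with hμ
  have hi : Integrable g μ := int_bdd hg hb
  have hex : ∀ n : ℕ, ∃ f : X × Y → ℝ, Continuous f ∧ (∀ p, |f p| ≤ M) ∧
      eLpNorm (f - g) 1 μ ≤ ((n : ℝ≥0∞) + 1)⁻¹ := by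
    intro n
    obtain ⟨f, hf, -⟩ := (memLp_one_iff_integrable.2 hi).exists_boundedContinuous_eLpNorm_sub_le
      ENNReal.one_ne_top (ε := ((n : ℝ≥0∞) + 1)⁻¹) (by simp)
    refine ⟨fun p => max (min (f p) M) (-M), by fun_prop, fun p => clamp_abs hM, ?_⟩
    refine le_trans (eLpNorm_mono fun p => ?_) hf
    have := clamp_dist (a := f p) (hb p)
    rw [abs_sub_comm (f p)] at this
    exact this
  choose G hG1 hG2 hG3 using hex
  have hT : TendstoInMeasure μ G atTop g := by
    refine tendstoInMeasure_of_tendsto_eLpNorm one_ne_zero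
      (fun n => (hG1 n).measurable.aestronglyMeasurable) hg.aestronglyMeasurable ?_
    refine tendsto_of_tendsto_of_tendsto_of_le_of_le tendsto_const_nhds ?_ (fun _ => zero_le) hG3
    have h := (ENNReal.tendsto_inv_nat_nhds_zero).comp (tendsto_add_atTop_nat 1)
    refine h.congr fun n => ?_
    simp
  obtain ⟨ns, -, hns⟩ := hT.exists_seq_tendsto_ae
  exact conv ν pi hg (fun n => (hG1 (ns n)).measurable) hb (fun n => hG2 (ns n)) hns
    fun n => cont_le ν pi hr (hG1 _) (hG2 _)

lemma trunc_le {r : ℝ} (hr : ∀ f : X × Y → ℝ, (∃ K, LipschitzWith K f) →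
  (∀ y, (∫ x, Real.exp (f (x, y)) ∂ν) = 1) → ∫ p, f p ∂pi ≤ r)
    {c : X × Y → ℝ} (hc : Measurable c)
    (hn : ∀ y, (∫ x, Real.exp (c (x, y)) ∂ν) = 1) (n : ℕ) :
    ∫ p, max (min (c p) n) (-n) ∂pi ≤ r + Real.exp (-n) := by
  set g : X × Y → ℝ := fun p => max (min (c p) n) (-n) with hgd
  have hg : Measurable g := (hc.min measurable_const).max measurable_const
  have hM : (0:ℝ) ≤ n := n.cast_nonneg
  have hb : ∀ p, |g p| ≤ n := fun p => clamp_abs hM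
  have h1 := meas_le ν pi hr hg hM hb
  have hL : ∀ y, L ν g y ≤ Real.exp (-n) := by
    intro y
    have hi : Integrable (fun x => Real.exp (c (x, y))) ν :=
      Integrable.of_integral_ne_zero (by rw [hn y]; exact one_ne_zero)
    have h0 := (Real.exp_pos (-n)).trans_le (exp_bounds ν hg hb y).1
    have : ∫ x, Real.exp (g (x, y)) ∂ν ≤ 1 + Real.exp (-n) := by
      have h := integral_mono (int_exp ν hg hb y) (hi.add (integrable_const (Real.exp (-n))))
        (fun x => ?_)
      · rw [integral_add' hi (integrable_const _), hn y] at h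
        simpa using h
      · simp only [Pi.add_apply, hgd]
        rcases max_choice (min (c (x, y)) n) (-n : ℝ) with h | h <;> rw [h]
        · have := Real.exp_le_exp.2 (min_le_left (c (x, y)) n)
          linarith [Real.exp_pos (-n : ℝ)]
        · linarith [Real.exp_pos (c (x, y))]
    have := Real.log_le_sub_one_of_pos h0
    unfold L
    linarith
  have h2 : ∫ p, (g p - Real.exp (-n)) ∂pi ≤ ∫ p, N ν g p ∂pi :=
    integral_mono ((int_bdd hg hb).sub (integrable_const _))
      (int_bdd (N_meas ν hg) (N_bdd ν hg hb)) fun p => sub_le_sub_left (hL p.2) _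
  rw [integral_sub (int_bdd hg hb) (integrable_const _)] at h2
  simp at h2
  linarith

lemma eInt_le {r : ℝ} (hr : ∀ f : X × Y → ℝ, (∃ K, LipschitzWith K f) →
  (∀ y, (∫ x, Real.exp (f (x, y)) ∂ν) = 1) → ∫ p, f p ∂pi ≤ r)
    {c : X × Y → ℝ} (hc : Measurable c)
    (hn : ∀ y, (∫ x, Real.exp (c (x, y)) ∂ν) = 1) (hw : IntWellDef pi c) :
    eInt pi c ≤ (r : EReal) := by
  by_cases hB : (∫⁻ x, ENNReal.ofReal (-c x) ∂pi) = ⊤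
  · have hA : (∫⁻ x, ENNReal.ofReal (c x) ∂pi) ≠ ⊤ := by
      rcases hw with h | h
      · exact h
      · exact absurd hB h
    unfold eInt
    rw [hB]
    lift (∫⁻ x, ENNReal.ofReal (c x) ∂pi) to NNReal using hA with a
    simp
  set g : ℕ → X × Y → ℝ := fun n p => max (min (c p) n) (-n) with hgd
  have hg : ∀ n, Measurable (g n) := fun n => (hc.min measurable_const).max measurable_const
  have hb : ∀ n p, |g n p| ≤ n := fun n p => clamp_abs n.cast_nonneg
  have hgp : ∀ n p, ENNReal.ofReal (g n p) = min (ENNReal.ofReal (c p)) n := by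
    intro n p
    have h0 : (0:ℝ) ≤ n := n.cast_nonneg
    have : ENNReal.ofReal (-(n:ℝ)) = 0 := ENNReal.ofReal_of_nonpos (by linarith)
    simp only [hgd, ENNReal.ofReal_max, ENNReal.ofReal_min, this, ENNReal.ofReal_natCast]
    simp
  have hgn : ∀ n p, ENNReal.ofReal (-g n p) ≤ ENNReal.ofReal (-c p) := by
    intro n p
    have h0 : (0:ℝ) ≤ n := n.cast_nonneg
    rw [ENNReal.ofReal_le_ofReal_iff']
    simp only [hgd]
    rcases le_total (c p) n with h | h
    · left
      rw [min_eq_left h]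
      exact neg_le_neg (le_max_left _ _)
    · right
      rw [min_eq_right h, max_eq_left (by linarith)]
      linarith
  have hA : Tendsto (fun n => ∫⁻ p, ENNReal.ofReal (g n p) ∂pi) atTop
      (𝓝 (∫⁻ p, ENNReal.ofReal (c p) ∂pi)) := by
    refine lintegral_tendsto_of_tendsto_of_monotone
      (fun n => (hg n).ennreal_ofReal.aemeasurable) (Eventually.of_forall fun p => ?_)
      (Eventually.of_forall fun p => ?_)
    · intro n m hnm
      simp only [hgp]
      gcongr
    · simp only [hgp]
      refine tendsto_const_nhds.congr' ?_
      obtain ⟨n0, h0⟩ := exists_nat_ge (c p)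
      filter_upwards [eventually_ge_atTop n0] with n hn'
      refine (min_eq_left ?_).symm
      refine ENNReal.ofReal_le_of_le_toReal ?_
      simp only [ENNReal.toReal_natCast]
      exact h0.trans (by exact_mod_cast hn')
  set B := ∫⁻ x, ENNReal.ofReal (-c x) ∂pi with hBd
  have key : ∀ n : ℕ, ((∫⁻ p, ENNReal.ofReal (g n p) ∂pi : ℝ≥0∞) : EReal) ≤
      ((r + Real.exp (-n) + B.toReal : ℝ) : EReal) := by
    intro n
    have hi : Integrable (g n) pi := int_bdd (hg n) (hb n)
    have h1 := trunc_le ν pi hr hc hn n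
    change ∫ p, g n p ∂pi ≤ _ at h1
    rw [integral_eq_lintegral_pos_part_sub_lintegral_neg_part hi] at h1
    have h2 : (∫⁻ p, ENNReal.ofReal (-g n p) ∂pi).toReal ≤ B.toReal :=
      ENNReal.toReal_mono hB (lintegral_mono (hgn n))
    rw [← ENNReal_coe hi.lintegral_lt_top.ne, EReal.coe_le_coe_iff]
    linarith
  have hlim : ((∫⁻ p, ENNReal.ofReal (c p) ∂pi : ℝ≥0∞) : EReal) ≤ ((r + B.toReal : ℝ) : EReal) := by
    refine le_of_tendsto_of_tendsto' ((continuous_coe_ennreal_ereal.tendsto _).comp hA) ?_ key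
    refine (continuous_coe_real_ereal.tendsto _).comp ?_
    have : Tendsto (fun n : ℕ => Real.exp (-(n:ℝ))) atTop (𝓝 0) :=
      Real.tendsto_exp_neg_atTop_nhds_zero.comp tendsto_natCast_atTop_atTop
    simpa using (this.const_add r).add_const B.toReal
  unfold eInt
  rw [← hBd, ← ENNReal_coe hB]
  refine EReal.sub_le_of_le_add ?_
  rw [← EReal.coe_add]
  exact hlim

end main
end S11

/-- for compact metric spaces `X`, `Y`, an a priori probability `ν` with full
support, and a Borel probability `π` on `X × Y`, the entropy `H^ν(π)` can be computed taking
the supremum over Lipschitz `ν`-normalized functions only. -/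
theorem statement11 {X Y : Type*}
    [MetricSpace X] [CompactSpace X] [MeasurableSpace X] [BorelSpace X]
    [MetricSpace Y] [CompactSpace Y] [MeasurableSpace Y] [BorelSpace Y]
    (ν : Measure X) [IsProbabilityMeasure ν] [ν.IsOpenPosMeasure]
    (pi : Measure (X × Y)) [IsProbabilityMeasure pi] :
    Hnu ν pi
      = - sSup { r : EReal | ∃ f : X × Y → ℝ, (∃ K, LipschitzWith K f) ∧
          (∀ y, (∫ x, Real.exp (f (x, y)) ∂ν) = 1) ∧
          r = ((∫ p, f p ∂pi : ℝ) : EReal) } := by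
  unfold Hnu
  congr 1
  apply le_antisymm
  · refine sSup_le ?_
    rintro _ ⟨c, hc, hn, hw, rfl⟩
    set T : Set EReal := { r : EReal | ∃ f : X × Y → ℝ, (∃ K, LipschitzWith K f) ∧
          (∀ y, (∫ x, Real.exp (f (x, y)) ∂ν) = 1) ∧
          r = ((∫ p, f p ∂pi : ℝ) : EReal) } with hT
    have hmem : ∀ f : X × Y → ℝ, (∃ K, LipschitzWith K f) →
        (∀ y, (∫ x, Real.exp (f (x, y)) ∂ν) = 1) →
        ((∫ p, f p ∂pi : ℝ) : EReal) ≤ sSup T := fun f h1 h2 => le_sSup ⟨f, h1, h2, rfl⟩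
    have h0 := hmem (fun _ => 0) ⟨0, LipschitzWith.const 0⟩ (by simp)
    generalize sSup T = s at hmem h0
    induction s with
    | bot => simp at h0
    | top => exact le_top
    | coe r =>
      exact S11.eInt_le ν pi (fun f h1 h2 => EReal.coe_le_coe_iff.1 (hmem f h1 h2)) hc hn hw
  · refine sSup_le ?_
    rintro _ ⟨f, ⟨K, hK⟩, hn, rfl⟩
    have hi : Integrable f pi := by
      obtain ⟨M, hM⟩ := isCompact_univ.exists_bound_of_continuousOn hK.continuous.continuousOn
      exact S11.int_bdd hK.continuous.measurable fun p => hM p (Set.mem_univ p)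
    refine le_sSup ⟨f, hK.continuous.measurable, hn, Or.inl hi.lintegral_lt_top.ne, ?_⟩
    exact (S11.eInt_eq hi).symm


end
end

section
/- Let X and Y be compact metric spaces, ν a Borel probability measure on X, and π a Borel probability measure on X × Y with marginals P on X and Q on Y. Suppose there is a continuous (respectively Lipschitz) function φ : X × Y → ℝ such that e^φ is a ν-Jacobian of π. Then: (1) P and ν are equivalent (each absolutely continuous with respect to the other); (2) dP/dν(x) = ∫ e^{φ(x,y)} dQ(y), which is continuous (respectively Lipschitz); (3) there exist constants 0 < c₁ < c₂ with c₁ < dP/dν(x) < c₂ for all x ∈ X; and (4) setting ψ = φ − log(dP/dν), the function e^ψ is a P-Jacobian of π. -/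
open MeasureTheory ENNReal

noncomputable section

/-- `J` is a `ν`-Jacobian of `pi`: it is measurable, nonnegative, satisfies
`∫ J(x,y) dν(x) = 1` for all `y`, and `∬ f(x,y) J(x,y) dν(x) dπ(x,y) = ∫ f dπ` for every
bounded measurable `f`. -/
def IsNuJacobianOf {X Y : Type*} [MeasurableSpace X] [MeasurableSpace Y]
    (ν : Measure X) (pi : Measure (X × Y)) (J : X × Y → ℝ) : Prop :=
  Measurable J ∧ (∀ p, 0 ≤ J p) ∧ (∀ y, (∫ x, J (x, y) ∂ν) = 1) ∧
    ∀ f : X × Y → ℝ, Measurable f → (∃ C, ∀ p, |f p| ≤ C) →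
      (∫ p, (∫ x, f (x, p.2) * J (x, p.2) ∂ν) ∂pi) = ∫ p, f p ∂pi

/-- if `e^φ` is a `ν`-Jacobian of `π` for a continuous `φ`, then the `x`-marginal
`P` of `π` is equivalent to `ν` with density `dP/dν(x) = ∫ e^{φ(x,y)} dQ(y)` (continuous, and
Lipschitz if `φ` is), bounded between two positive constants, and `e^ψ` with
`ψ = φ − log(dP/dν)` is a `P`-Jacobian of `π`. -/
theorem statement12 {X Y : Type*}
    [MetricSpace X] [CompactSpace X] [MeasurableSpace X] [BorelSpace X]
    [MetricSpace Y] [CompactSpace Y] [MeasurableSpace Y] [BorelSpace Y]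
    (ν : Measure X) [IsProbabilityMeasure ν]
    (pi : Measure (X × Y)) [IsProbabilityMeasure pi]
    (P : Measure X) (Q : Measure Y)
    (hP : pi.map Prod.fst = P) (hQ : pi.map Prod.snd = Q)
    (φ : X × Y → ℝ) (hφ : Continuous φ)
    (hjac : IsNuJacobianOf ν pi (fun p => Real.exp (φ p))) :
    (P ≪ ν ∧ ν ≪ P)
    ∧ P = ν.withDensity (fun x => ENNReal.ofReal (∫ y, Real.exp (φ (x, y)) ∂Q))
    ∧ Continuous (fun x => ∫ y, Real.exp (φ (x, y)) ∂Q)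
    ∧ ((∃ K, LipschitzWith K φ) →
        ∃ K, LipschitzWith K (fun x => ∫ y, Real.exp (φ (x, y)) ∂Q))
    ∧ (∃ c₁ c₂ : ℝ, 0 < c₁ ∧ c₁ < c₂ ∧
        ∀ x, c₁ < (∫ y, Real.exp (φ (x, y)) ∂Q) ∧ (∫ y, Real.exp (φ (x, y)) ∂Q) < c₂)
    ∧ IsNuJacobianOf P pi
        (fun p => Real.exp (φ p - Real.log (∫ y, Real.exp (φ (p.1, y)) ∂Q))) := by
  subst hP
  obtain ⟨hJm, -, hJ1, hJf⟩ := hjac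
  have : IsProbabilityMeasure Q := by
    rw [← hQ]; exact Measure.isProbabilityMeasure_map measurable_snd.aemeasurable
  obtain ⟨M, hM⟩ : ∃ M : ℝ, ∀ p, |φ p| ≤ M := by
    obtain ⟨M, hM⟩ := (isCompact_range hφ).isBounded.exists_norm_le
    exact ⟨M, fun p => hM _ ⟨p, rfl⟩⟩
  have hle : ∀ p, Real.exp (φ p) ≤ Real.exp M := fun p =>
    Real.exp_le_exp.2 (abs_le.1 (hM p)).2
  have hge : ∀ p, Real.exp (-M) ≤ Real.exp (φ p) := fun p =>
    Real.exp_le_exp.2 (abs_le.1 (hM p)).1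
  have hec : Continuous (fun p => Real.exp (φ p)) := Real.continuous_exp.comp hφ
  have hint : ∀ x, Integrable (fun y => Real.exp (φ (x, y))) Q := fun x =>
    Integrable.of_bound (by fun_prop : Continuous _).aestronglyMeasurable (Real.exp M)
      (Filter.Eventually.of_forall fun y => by
        rw [Real.norm_eq_abs, abs_of_pos (Real.exp_pos _)]; exact hle _)
  set g : X → ℝ := fun x => ∫ y, Real.exp (φ (x, y)) ∂Q with hg
  have hgc : Continuous g := by
    refine continuous_of_dominated (bound := fun _ => Real.exp M) ?_ ?_ ?_ ?_
    · intro x; exact (hint x).aestronglyMeasurable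
    · intro x
      exact Filter.Eventually.of_forall fun y => by
        rw [Real.norm_eq_abs, abs_of_pos (Real.exp_pos _)]; exact hle _
    · exact integrable_const _
    · exact Filter.Eventually.of_forall fun y => by fun_prop
  have hgle : ∀ x, g x ≤ Real.exp M := fun x => by
    have := integral_mono (hint x) (integrable_const (Real.exp M)) (fun y => hle (x, y))
    simpa using this
  have hgge : ∀ x, Real.exp (-M) ≤ g x := fun x => by
    have := integral_mono (integrable_const (Real.exp (-M))) (hint x) (fun y => hge (x, y))
    simpa using this
  have hgpos : ∀ x, 0 < g x := fun x => (Real.exp_pos _).trans_le (hgge x)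
  have hgint : Integrable g ν :=
    Integrable.of_bound hgc.aestronglyMeasurable (Real.exp M)
      (Filter.Eventually.of_forall fun y => by
        rw [Real.norm_eq_abs, abs_of_pos (hgpos _)]; exact hgle _)
  have hdens : pi.map Prod.fst = ν.withDensity (fun x => ENNReal.ofReal (g x)) := by
    ext A hA
    rw [withDensity_apply _ hA, Measure.map_apply measurable_fst hA,
      ← ofReal_integral_eq_lintegral_ofReal hgint.integrableOn
        (Filter.Eventually.of_forall fun x => (hgpos x).le), ← ofReal_measureReal]
    congr 1
    have hind : Measurable (fun x : X => A.indicator (fun _ => (1 : ℝ)) x) :=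
      measurable_const.indicator hA
    have hb : ∀ x : X, |A.indicator (fun _ => (1 : ℝ)) x| ≤ 1 := fun x => by
      by_cases h : x ∈ A <;> simp [h]
    have h := hJf (fun p => A.indicator (fun _ => (1 : ℝ)) p.1) (hind.comp measurable_fst)
      ⟨1, fun p => hb _⟩
    have h2 : ∫ p : X × Y, A.indicator (fun _ => (1 : ℝ)) p.1 ∂pi
        = pi.real (Prod.fst ⁻¹' A) := by
      rw [← integral_indicator_one (measurable_fst hA)]
      rfl
    have hFm : Measurable (fun q : X × Y =>
        A.indicator (fun _ => (1 : ℝ)) q.1 * Real.exp (φ q)) :=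
      (hind.comp measurable_fst).mul hJm
    have hFm' : Measurable (fun q : Y × X =>
        A.indicator (fun _ => (1 : ℝ)) q.2 * Real.exp (φ (q.2, q.1))) :=
      hFm.comp measurable_swap
    rw [← h2, ← h]
    have h3 : ∫ p : X × Y, (∫ x, A.indicator (fun _ => (1 : ℝ)) x * Real.exp (φ (x, p.2)) ∂ν) ∂pi
        = ∫ y, (∫ x, A.indicator (fun _ => (1 : ℝ)) x * Real.exp (φ (x, y)) ∂ν) ∂Q := by
      rw [← hQ, integral_map measurable_snd.aemeasurable]
      exact (hFm'.stronglyMeasurable.integral_prod_right).aestronglyMeasurable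
    refine h3.trans ?_
    rw [integral_integral_swap, ← integral_indicator hA]
    · refine integral_congr_ae (Filter.Eventually.of_forall fun x => ?_)
      by_cases hx : x ∈ A <;> simp [hx, hg]
    · refine Integrable.of_bound hFm'.aestronglyMeasurable (Real.exp M)
        (Filter.Eventually.of_forall fun q => ?_)
      simp only [Function.uncurry]
      rw [norm_mul, Real.norm_eq_abs, Real.norm_eq_abs, abs_of_pos (Real.exp_pos _)]
      calc _ ≤ 1 * Real.exp M :=
            mul_le_mul (hb _) (hle _) (Real.exp_pos _).le zero_le_one
        _ = _ := one_mul _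
  have hgm : Measurable (fun x => ENNReal.ofReal (g x)) :=
    ENNReal.measurable_ofReal.comp hgc.measurable
  have hexp : ∀ p : X × Y, Real.exp (φ p - Real.log (g p.1)) = Real.exp (φ p) / g p.1 := by
    intro p; rw [Real.exp_sub, Real.exp_log (hgpos _)]
  have hchange : ∀ (F : X → ℝ) (y : Y),
      ∫ x, F x * (Real.exp (φ (x, y)) / g x) ∂(pi.map Prod.fst)
        = ∫ x, F x * Real.exp (φ (x, y)) ∂ν := by
    intro F y
    rw [hdens, integral_withDensity_eq_integral_toReal_smul hgm
      (Filter.Eventually.of_forall fun x => ENNReal.ofReal_lt_top)]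
    refine integral_congr_ae (Filter.Eventually.of_forall fun x => ?_)
    have := (hgpos x).ne'
    simp only [ENNReal.toReal_ofReal (hgpos x).le, smul_eq_mul]
    field_simp
  refine ⟨⟨?_, ?_⟩, hdens, hgc, ?_, ?_, ?_⟩
  · rw [hdens]; exact withDensity_absolutelyContinuous _ _
  · rw [hdens]
    exact withDensity_absolutelyContinuous' hgm.aemeasurable
      (Filter.Eventually.of_forall fun x => by simpa using hgpos x)
  · rintro ⟨K, hK⟩
    refine ⟨(Real.exp M).toNNReal * K, LipschitzWith.of_dist_le_mul fun a b => ?_⟩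
    have hpt : ∀ s t : ℝ, s ≤ M → t ≤ M → Real.exp s - Real.exp t ≤ Real.exp M * |s - t| := by
      intro s t hs ht
      have h1 : Real.exp t = Real.exp s * Real.exp (t - s) := by
        rw [← Real.exp_add]; congr 1; ring
      have h2 := Real.add_one_le_exp (t - s)
      have h3 := Real.exp_pos s
      have h4 : Real.exp s ≤ Real.exp M := Real.exp_le_exp.2 hs
      have h5 : s - t ≤ |s - t| := le_abs_self _
      have h6 := abs_nonneg (s - t)
      calc Real.exp s - Real.exp t ≤ Real.exp s * (s - t) := by rw [h1]; nlinarith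
        _ ≤ Real.exp s * |s - t| := by gcongr
        _ ≤ _ := by gcongr
    have hub : ∀ p, φ p ≤ M := fun p => (abs_le.1 (hM p)).2
    rw [Real.dist_eq, hg]
    simp only
    rw [← integral_sub (hint a) (hint b), ← Real.norm_eq_abs]
    have := norm_integral_le_of_norm_le_const (μ := Q)
      (f := fun y => Real.exp (φ (a, y)) - Real.exp (φ (b, y)))
      (C := Real.exp M * (K * dist a b)) (Filter.Eventually.of_forall fun y => ?_)
    · simpa [NNReal.coe_mul, Real.coe_toNNReal _ (Real.exp_pos M).le, mul_assoc] using this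
    · have hd : |φ (a, y) - φ (b, y)| ≤ K * dist a b := by
        have := hK.dist_le_mul (a, y) (b, y)
        simpa [Prod.dist_eq, Real.dist_eq] using this
      rw [Real.norm_eq_abs]
      refine le_trans ?_ (mul_le_mul_of_nonneg_left hd (Real.exp_pos M).le)
      refine abs_le'.2 ⟨hpt _ _ (hub _) (hub _), ?_⟩
      rw [neg_sub, abs_sub_comm]
      exact hpt _ _ (hub _) (hub _)
  · have h1 := Real.exp_pos (-M)
    have h2 := Real.exp_pos M
    refine ⟨Real.exp (-M) / 2, Real.exp M + Real.exp (-M), by linarith, by linarith, fun x => ?_⟩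
    exact ⟨by linarith [hgge x], by linarith [hgle x]⟩
  · change IsNuJacobianOf _ pi (fun p => Real.exp (φ p - Real.log (g p.1)))
    simp only [hexp]
    refine ⟨hJm.div (hgc.measurable.comp measurable_fst),
      fun p => div_nonneg (Real.exp_pos _).le (hgpos _).le, fun y => ?_, fun f hf hfb => ?_⟩
    · have := hchange (fun _ => 1) y
      simp only [one_mul] at this
      exact this.trans (hJ1 y)
    · rw [← hJf f hf hfb]
      refine integral_congr_ae (Filter.Eventually.of_forall fun p => ?_)
      exact hchange (fun x => f (x, p.2)) p.2

end
end
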